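/- arXiv:1908.04543 — 4 statements merged into one kernel-verified Lean document; each statement's English description precedes it below -/
import Mathlib

section
/- Let λ ∈ (−1/π, 1/π), set α = arcsin(λπ)/π (so that sin(πα) = λπ and α ∈ (−1/2, 1/2)), and let μ > 0. Define J(x) := x·F_α(x/μ²) for x ≥ 0. Then for every x ≥ 0 the integral ∫₀^∞ J(t)/((t+μ²)²(t+μ²+x)) dt converges absolutely and J satisfies the Fredholm integral equation of second kind J(x) = x − λ x² ∫₀^∞ J(t)/((t+μ²)²(t+μ²+x)) dt. -/
open MeasureTheory Real Set

/-- The Gauss hypergeometric function `₂F₁(α, 1-α; 2; -x)` via its Euler integral. -/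
noncomputable def Fhyp (α x : ℝ) : ℝ :=
  (1 / (Real.Gamma (1 - α) * Real.Gamma (1 + α))) *
    ∫ u in (0:ℝ)..1, u ^ (-α) * (1 - u) ^ α * (1 + x * u) ^ (-α)

/-!
A Stieltjes formula with two poles gives, after the substitution `s = u(1 + t) - 1`,
`1 - (1 + xu)^(-α) = (sin πα / π) x ∫ (u(1 + t) - 1)₊^(-α) / ((1 + t)(1 + t + x)) dt` for
`0 < u < 1`. Integrate this against the Euler weight `u^(-α) (1 - u)^α` and exchange the integrals.
For fixed `t > 0` the truncation leaves `1 / (1 + t) < u < 1`, and `u = (1 + tv) / (1 + t)` turns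
the integral over `u` into the Euler integral of `F_α` at `t`, times `t / (1 + t)`. Hence
`1 - F_α(x) = (sin πα / π) x ∫₀^∞ t F_α(t) / ((1 + t)² (1 + t + x)) dt`,
which is the Fredholm equation up to scaling by `μ²`.
-/

/-! ### Affine substitutions -/

section Affine

variable {E : Type*} [NormedAddCommGroup E]

theorem integral_comp_mul_add_real [NormedSpace ℝ E] (g : ℝ → E) (a b : ℝ) :
    ∫ x, g (a * x + b) = |a⁻¹| • ∫ x, g x := by
  rw [Measure.integral_comp_mul_left (fun y ↦ g (y + b)) a, integral_add_right_eq_self]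

theorem integrable_comp_mul_add_real {g : ℝ → E} (hg : Integrable g) {a : ℝ} (ha : a ≠ 0)
    (b : ℝ) : Integrable fun x ↦ g (a * x + b) :=
  (hg.comp_add_right b).comp_mul_left' ha

end Affine

/-! ### Beta integrals -/

section Beta

variable {a b : ℝ}

theorem ofReal_rpow_mul_one_sub_rpow {u : ℝ} (hu : u ∈ Ioo (0 : ℝ) 1) :
    ((u ^ (a - 1) * (1 - u) ^ (b - 1) : ℝ) : ℂ) =
      (u : ℂ) ^ ((a : ℂ) - 1) * (1 - (u : ℂ)) ^ ((b : ℂ) - 1) := by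
  push_cast [Complex.ofReal_cpow hu.1.le, Complex.ofReal_cpow (sub_nonneg.2 hu.2.le)]
  rfl

theorem integrableOn_Ioo_rpow_mul_one_sub_rpow (ha : 0 < a) (hb : 0 < b) :
    IntegrableOn (fun u : ℝ ↦ u ^ (a - 1) * (1 - u) ^ (b - 1)) (Ioo 0 1) := by
  have hbeta := Complex.betaIntegral_convergent (u := a) (v := b) (by simpa) (by simpa)
  rw [intervalIntegrable_iff_integrableOn_Ioo_of_le zero_le_one] at hbeta
  have hreal : IntegrableOn (fun u : ℝ ↦ ((u ^ (a - 1) * (1 - u) ^ (b - 1) : ℝ) : ℂ)) (Ioo 0 1) :=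
    hbeta.congr_fun (fun _ hu ↦ (ofReal_rpow_mul_one_sub_rpow hu).symm) measurableSet_Ioo
  exact hreal.re

theorem integral_Ioo_rpow_mul_one_sub_rpow (ha : 0 < a) (hb : 0 < b) :
    ∫ u in Ioo (0 : ℝ) 1, u ^ (a - 1) * (1 - u) ^ (b - 1) = ProbabilityTheory.beta a b := by
  rw [ProbabilityTheory.beta_eq_betaIntegralReal a b ha hb, Complex.betaIntegral,
    intervalIntegral.integral_of_le zero_le_one, integral_Ioc_eq_integral_Ioo,
    ← setIntegral_congr_fun measurableSet_Ioo fun _ hu ↦ ofReal_rpow_mul_one_sub_rpow hu,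
    integral_complex_ofReal, Complex.ofReal_re]

theorem image_inv_one_add_Ioi : (fun s : ℝ ↦ (1 + s)⁻¹) '' Ioi 0 = Ioo 0 1 := by
  rw [← image_image (fun s : ℝ ↦ s⁻¹), image_const_add_Ioi, add_zero, image_inv_eq_inv,
    inv_Ioi₀ one_pos, inv_one]

theorem antitoneOn_inv_one_add : AntitoneOn (fun s : ℝ ↦ (1 + s)⁻¹) (Ioi 0) :=
  fun s hs t _ hst ↦ inv_anti₀ (by linarith [mem_Ioi.1 hs]) (by linarith)

theorem hasDerivAt_inv_one_add {s : ℝ} (hs : 0 < s) :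
    HasDerivAt (fun s : ℝ ↦ (1 + s)⁻¹) (-((1 + s) ^ 2)⁻¹) s := by
  simpa [neg_div] using ((hasDerivAt_id s).const_add 1).fun_inv (by positivity : 1 + id s ≠ 0)

theorem neg_deriv_inv_one_add_smul_beta_integrand {s : ℝ} (hs : 0 < s) :
    (- -((1 + s) ^ 2)⁻¹) • (((1 + s)⁻¹) ^ (b - 1) * (1 - (1 + s)⁻¹) ^ (a - 1)) =
      s ^ (a - 1) * (1 + s) ^ (-(a + b)) := by
  have h1s : 0 < 1 + s := by positivity
  have hsub : 1 - (1 + s)⁻¹ = s * (1 + s)⁻¹ := by field_simp; ring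
  have hsplit : (1 + s) ^ (-(a + b)) =
      (1 + s) ^ (-2 : ℝ) * (1 + s) ^ (-(b - 1)) * (1 + s) ^ (-(a - 1)) := by
    rw [← rpow_add h1s, ← rpow_add h1s]
    ring_nf
  rw [hsub, mul_rpow hs.le (inv_pos.2 h1s).le, inv_rpow h1s.le, inv_rpow h1s.le,
    ← rpow_neg h1s.le, ← rpow_neg h1s.le, hsplit, rpow_neg h1s.le 2, rpow_two, smul_eq_mul]
  ring

theorem integrableOn_Ioi_rpow_mul_one_add_rpow (ha : 0 < a) (hb : 0 < b) :
    IntegrableOn (fun s : ℝ ↦ s ^ (a - 1) * (1 + s) ^ (-(a + b))) (Ioi 0) := by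
  have hbeta := integrableOn_Ioo_rpow_mul_one_sub_rpow hb ha
  rw [← image_inv_one_add_Ioi, integrableOn_image_iff_integrableOn_deriv_smul_of_antitoneOn
    measurableSet_Ioi (fun s hs ↦ (hasDerivAt_inv_one_add hs).hasDerivWithinAt)
    antitoneOn_inv_one_add] at hbeta
  exact hbeta.congr_fun (fun _ hs ↦ neg_deriv_inv_one_add_smul_beta_integrand hs) measurableSet_Ioi

theorem integral_Ioi_rpow_mul_one_add_rpow (ha : 0 < a) (hb : 0 < b) :
    ∫ s in Ioi (0 : ℝ), s ^ (a - 1) * (1 + s) ^ (-(a + b)) = ProbabilityTheory.beta b a := by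
  rw [← integral_Ioo_rpow_mul_one_sub_rpow hb ha, ← image_inv_one_add_Ioi,
    integral_image_eq_integral_deriv_smul_of_antitoneOn measurableSet_Ioi
      (fun s hs ↦ (hasDerivAt_inv_one_add hs).hasDerivWithinAt) antitoneOn_inv_one_add]
  exact (setIntegral_congr_fun measurableSet_Ioi
    fun _ hs ↦ neg_deriv_inv_one_add_smul_beta_integrand hs).symm

end Beta

/-! ### Stieltjes transforms of powers -/

section Stieltjes

variable {a α c d : ℝ}

theorem min_one_mul_one_add_le {s : ℝ} (hs : 0 ≤ s) : min c 1 * (1 + s) ≤ c + s := by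
  nlinarith [min_le_left c 1, min_le_right c 1]

theorem integrableOn_Ioi_rpow_neg_div_add (ha : 0 < a) (ha' : a < 1) (hc : 0 < c) :
    IntegrableOn (fun s : ℝ ↦ s ^ (-a) / (c + s)) (Ioi 0) := by
  have hbeta := integrableOn_Ioi_rpow_mul_one_add_rpow (sub_pos.2 ha') ha
  refine (hbeta.const_mul (min c 1)⁻¹).mono' (by fun_prop : Measurable _).aestronglyMeasurable ?_
  filter_upwards [ae_restrict_mem measurableSet_Ioi] with s (hs : 0 < s)
  rw [norm_of_nonneg (by positivity), show 1 - a - 1 = -a by ring,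
    show -(1 - a + a) = (-1 : ℝ) by ring, rpow_neg_one, mul_left_comm, ← mul_inv, ← div_eq_mul_inv]
  gcongr
  exact min_one_mul_one_add_le hs.le

theorem integral_Ioi_rpow_neg_div_one_add (ha : 0 < a) (ha' : a < 1) :
    ∫ s in Ioi (0 : ℝ), s ^ (-a) / (1 + s) = π / sin (π * a) := by
  calc ∫ s in Ioi (0 : ℝ), s ^ (-a) / (1 + s)
      = ∫ s in Ioi (0 : ℝ), s ^ (1 - a - 1) * (1 + s) ^ (-(1 - a + a)) := by
        simp [rpow_neg_one, div_eq_mul_inv]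
    _ = ProbabilityTheory.beta a (1 - a) :=
        integral_Ioi_rpow_mul_one_add_rpow (sub_pos.2 ha') ha
    _ = π / sin (π * a) := by
        rw [ProbabilityTheory.beta, Real.Gamma_mul_Gamma_one_sub, add_sub_cancel, Real.Gamma_one,
          div_one]

theorem integral_Ioi_rpow_neg_div_add (ha : 0 < a) (ha' : a < 1) (hc : 0 < c) :
    ∫ s in Ioi (0 : ℝ), s ^ (-a) / (c + s) = π / sin (π * a) * c ^ (-a) := by
  have hscale := integral_comp_mul_left_Ioi (fun s : ℝ ↦ s ^ (-a) / (c + s)) 0 hc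
  have hpoint : EqOn (fun r : ℝ ↦ (c * r) ^ (-a) / (c + c * r))
      (fun r ↦ c⁻¹ * c ^ (-a) * (r ^ (-a) / (1 + r))) (Ioi 0) := by
    intro r (hr : 0 < r)
    simp only [mul_rpow hc.le hr.le]
    field_simp
  rw [mul_zero, setIntegral_congr_fun measurableSet_Ioi hpoint, integral_const_mul,
    integral_Ioi_rpow_neg_div_one_add ha ha', smul_eq_mul, mul_assoc] at hscale
  rw [← mul_left_cancel₀ (inv_ne_zero hc.ne') hscale, mul_comm]

theorem sin_mul_integral_Ioi_rpow_neg_div_add (ha : 0 < a) (ha' : a < 1) (hc : 0 < c) :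
    sin (π * a) * ∫ s in Ioi (0 : ℝ), s ^ (-a) / (c + s) = π * c ^ (-a) := by
  have hsin : 0 < sin (π * a) :=
    sin_pos_of_pos_of_lt_pi (by positivity) (by nlinarith [pi_pos])
  rw [integral_Ioi_rpow_neg_div_add ha ha' hc]
  field_simp

theorem integrableOn_Ioi_rpow_neg_div_add_mul_add (hα : α ∈ Ioo (-1) 1) (hc : 0 < c)
    (hd : 0 < d) : IntegrableOn (fun s : ℝ ↦ s ^ (-α) / ((c + s) * (d + s))) (Ioi 0) := by
  have hbeta := integrableOn_Ioi_rpow_mul_one_add_rpow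
    (a := 1 - α) (b := 1 + α) (by linarith [hα.2]) (by linarith [hα.1])
  refine (hbeta.const_mul (min c 1 * min d 1)⁻¹).mono'
    (by fun_prop : Measurable _).aestronglyMeasurable ?_
  filter_upwards [ae_restrict_mem measurableSet_Ioi] with s (hs : 0 < s)
  rw [norm_of_nonneg (by positivity), show 1 - α - 1 = -α by ring,
    show -(1 - α + (1 + α)) = (-2 : ℝ) by ring, rpow_neg (by positivity : 0 ≤ 1 + s), rpow_two,
    mul_left_comm, ← mul_inv, ← div_eq_mul_inv, sq, mul_mul_mul_comm]
  gcongr <;> exact min_one_mul_one_add_le hs.le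

theorem sin_mul_integral_Ioi_rpow_neg_div_add_mul_add_of_pos (hα : 0 < α) (hα' : α < 1)
    (hc : 0 < c) (hd : 0 < d) :
    sin (π * α) * ((d - c) * ∫ s in Ioi (0 : ℝ), s ^ (-α) / ((c + s) * (d + s))) =
      π * (c ^ (-α) - d ^ (-α)) := by
  have hpartial : EqOn (fun s : ℝ ↦ (d - c) * (s ^ (-α) / ((c + s) * (d + s))))
      (fun s ↦ s ^ (-α) / (c + s) - s ^ (-α) / (d + s)) (Ioi 0) := by
    intro s (hs : 0 < s)
    field_simp
    ring
  rw [← integral_const_mul, setIntegral_congr_fun measurableSet_Ioi hpartial,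
    integral_sub (integrableOn_Ioi_rpow_neg_div_add hα hα' hc)
      (integrableOn_Ioi_rpow_neg_div_add hα hα' hd), mul_sub,
    sin_mul_integral_Ioi_rpow_neg_div_add hα hα' hc,
    sin_mul_integral_Ioi_rpow_neg_div_add hα hα' hd, mul_sub]

theorem sin_mul_integral_Ioi_rpow_neg_div_add_mul_add_of_neg (hα : -1 < α) (hα' : α < 0)
    (hc : 0 < c) (hd : 0 < d) :
    sin (π * α) * ((d - c) * ∫ s in Ioi (0 : ℝ), s ^ (-α) / ((c + s) * (d + s))) =
      π * (c ^ (-α) - d ^ (-α)) := by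
  have hpos : 0 < α + 1 := by linarith
  have hlt : α + 1 < 1 := by linarith
  have hrpow {s : ℝ} (hs : 0 < s) : s ^ (-α) = s * s ^ (-(α + 1)) := by
    rw [← rpow_one_add' hs.le (by linarith)]
    ring_nf
  have hpartial : EqOn (fun s : ℝ ↦ (d - c) * (s ^ (-α) / ((c + s) * (d + s))))
      (fun s ↦ d * (s ^ (-(α + 1)) / (d + s)) - c * (s ^ (-(α + 1)) / (c + s))) (Ioi 0) := by
    intro s (hs : 0 < s)
    simp only [hrpow hs]
    field_simp
    ring
  have hsin : sin (π * (α + 1)) = -sin (π * α) := by rw [mul_add_one, sin_add_pi]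
  have hstieltjes_c := sin_mul_integral_Ioi_rpow_neg_div_add hpos hlt hc
  have hstieltjes_d := sin_mul_integral_Ioi_rpow_neg_div_add hpos hlt hd
  rw [hsin] at hstieltjes_c hstieltjes_d
  rw [← integral_const_mul, setIntegral_congr_fun measurableSet_Ioi hpartial,
    integral_sub ((integrableOn_Ioi_rpow_neg_div_add hpos hlt hd).const_mul d)
      ((integrableOn_Ioi_rpow_neg_div_add hpos hlt hc).const_mul c),
    integral_const_mul, integral_const_mul, hrpow hc, hrpow hd]
  linear_combination c * hstieltjes_c - d * hstieltjes_d

theorem sin_mul_integral_Ioi_rpow_neg_div_add_mul_add (hα : α ∈ Ioo (-1) 1) (hc : 0 < c)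
    (hd : 0 < d) :
    sin (π * α) * ((d - c) * ∫ s in Ioi (0 : ℝ), s ^ (-α) / ((c + s) * (d + s))) =
      π * (c ^ (-α) - d ^ (-α)) := by
  rcases lt_trichotomy α 0 with hneg | rfl | hpos
  · exact sin_mul_integral_Ioi_rpow_neg_div_add_mul_add_of_neg hα.1 hneg hc hd
  · simp
  · exact sin_mul_integral_Ioi_rpow_neg_div_add_mul_add_of_pos hpos hα.2 hc hd

end Stieltjes

/-! ### Truncated powers and the Euler weight -/

/-- The truncated power `s₊ ^ p`: it is `s ^ p` for `0 < s` and `0` for `s ≤ 0`, also when `p ≤ 0`.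
With it the integrals over the Euler variable and over the spectral variable become integrals over
the whole line, where affine substitutions need no bookkeeping of endpoints. -/
noncomputable def truncRpow (p : ℝ) : ℝ → ℝ :=
  (Ioi 0).indicator (· ^ p)

section TruncRpow

variable {p c s : ℝ}

theorem truncRpow_of_pos (hs : 0 < s) : truncRpow p s = s ^ p :=
  indicator_of_mem (mem_Ioi.2 hs) _

theorem truncRpow_of_nonpos (hs : s ≤ 0) : truncRpow p s = 0 :=
  indicator_of_notMem (notMem_Ioi.2 hs) _

theorem truncRpow_nonneg : 0 ≤ truncRpow p s :=
  indicator_nonneg (fun _ hs ↦ rpow_nonneg (le_of_lt hs) p) s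

@[fun_prop]
theorem measurable_truncRpow : Measurable (truncRpow p) :=
  (by fun_prop : Measurable (· ^ p : ℝ → ℝ)).indicator measurableSet_Ioi

theorem truncRpow_mul (hc : 0 < c) : truncRpow p (c * s) = c ^ p * truncRpow p s := by
  rcases lt_or_ge 0 s with hs | hs
  · rw [truncRpow_of_pos hs, truncRpow_of_pos (mul_pos hc hs), mul_rpow hc.le hs.le]
  · rw [truncRpow_of_nonpos hs, truncRpow_of_nonpos (mul_nonpos_of_nonneg_of_nonpos hc.le hs),
      mul_zero]

theorem truncRpow_div_eq_indicator (h : ℝ → ℝ) :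
    (fun s ↦ truncRpow p s / h s) = (Ioi 0).indicator fun s ↦ s ^ p / h s := by
  ext s
  by_cases hs : s ∈ Ioi 0 <;> simp [truncRpow, hs]

theorem integral_truncRpow_div (h : ℝ → ℝ) :
    ∫ s, truncRpow p s / h s = ∫ s in Ioi 0, s ^ p / h s := by
  rw [truncRpow_div_eq_indicator, integral_indicator measurableSet_Ioi]

theorem integrable_truncRpow_div_iff {h : ℝ → ℝ} :
    (Integrable fun s ↦ truncRpow p s / h s) ↔ IntegrableOn (fun s ↦ s ^ p / h s) (Ioi 0) := by
  rw [truncRpow_div_eq_indicator, integrable_indicator_iff measurableSet_Ioi]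

end TruncRpow

/-- The weight `u₊ ^ (-α) * (1 - u)₊ ^ α` of the Euler integral defining `Fhyp α`; it vanishes
outside `(0, 1)`. -/
noncomputable def eulerWeight (α u : ℝ) : ℝ :=
  truncRpow (-α) u * truncRpow α (1 - u)

section EulerWeight

variable {α x t u : ℝ}

theorem eulerWeight_nonneg : 0 ≤ eulerWeight α u :=
  mul_nonneg truncRpow_nonneg truncRpow_nonneg

@[fun_prop]
theorem measurable_eulerWeight : Measurable (eulerWeight α) := by
  unfold eulerWeight
  fun_prop

theorem eulerWeight_of_notMem (hu : u ∉ Ioo 0 1) : eulerWeight α u = 0 := by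
  rcases le_or_gt u 0 with hu0 | hu0
  · rw [eulerWeight, truncRpow_of_nonpos hu0, zero_mul]
  · rw [eulerWeight, truncRpow_of_nonpos (s := 1 - u), mul_zero]
    by_contra! hu1
    exact hu ⟨hu0, by linarith⟩

theorem eulerWeight_mul_eq_indicator (h : ℝ → ℝ) :
    (fun u ↦ eulerWeight α u * h u) =
      (Ioo 0 1).indicator fun u ↦ u ^ (-α) * (1 - u) ^ α * h u := by
  ext u
  by_cases hu : u ∈ Ioo 0 1
  · rw [indicator_of_mem hu, eulerWeight, truncRpow_of_pos hu.1, truncRpow_of_pos (sub_pos.2 hu.2)]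
  · rw [indicator_of_notMem hu, eulerWeight_of_notMem hu, zero_mul]

theorem eulerWeight_eq_indicator :
    eulerWeight α = (Ioo 0 1).indicator fun u ↦ u ^ (-α) * (1 - u) ^ α := by
  simpa using eulerWeight_mul_eq_indicator (α := α) 1

theorem integrable_eulerWeight (hα : α ∈ Ioo (-1) 1) : Integrable (eulerWeight α) := by
  have hbeta := integrableOn_Ioo_rpow_mul_one_sub_rpow
    (a := 1 - α) (b := 1 + α) (by linarith [hα.2]) (by linarith [hα.1])
  rw [eulerWeight_eq_indicator, integrable_indicator_iff measurableSet_Ioo]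
  simpa using hbeta

theorem integral_eulerWeight (hα : α ∈ Ioo (-1) 1) :
    ∫ u, eulerWeight α u = Real.Gamma (1 - α) * Real.Gamma (1 + α) := by
  have hbeta := integral_Ioo_rpow_mul_one_sub_rpow
    (a := 1 - α) (b := 1 + α) (by linarith [hα.2]) (by linarith [hα.1])
  rw [ProbabilityTheory.beta, show 1 - α + (1 + α) = 2 by ring, Real.Gamma_two, div_one] at hbeta
  rw [eulerWeight_eq_indicator, integral_indicator measurableSet_Ioo, ← hbeta]
  simp

theorem integral_eulerWeight_pos (hα : α ∈ Ioo (-1) 1) : 0 < ∫ u, eulerWeight α u := by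
  rw [integral_eulerWeight hα]
  exact mul_pos (Real.Gamma_pos_of_pos (by linarith [hα.2]))
    (Real.Gamma_pos_of_pos (by linarith [hα.1]))

theorem integrable_eulerWeight_mul_self (hα : α ∈ Ioo (-1) 1) :
    Integrable fun u ↦ eulerWeight α u * u := by
  refine (integrable_eulerWeight hα).mono' (by fun_prop) (.of_forall fun u ↦ ?_)
  by_cases hu : u ∈ Ioo 0 1
  · rw [norm_of_nonneg (mul_nonneg eulerWeight_nonneg hu.1.le)]
    exact mul_le_of_le_one_right eulerWeight_nonneg hu.2.le
  · simp [eulerWeight_of_notMem hu]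

theorem integral_eulerWeight_mul_one_add_mul_rpow (hα : α ∈ Ioo (-1) 1) (x : ℝ) :
    ∫ u, eulerWeight α u * (1 + x * u) ^ (-α) = (∫ u, eulerWeight α u) * Fhyp α x := by
  rw [Fhyp, ← integral_eulerWeight hα, one_div,
    mul_inv_cancel_left₀ (integral_eulerWeight_pos hα).ne',
    intervalIntegral.integral_of_le zero_le_one, integral_Ioc_eq_integral_Ioo,
    eulerWeight_mul_eq_indicator, integral_indicator measurableSet_Ioo]

end EulerWeight

/-! ### The two inner integrals -/

section InnerIntegrals

variable {α x t u : ℝ}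

theorem eulerWeight_mul_truncRpow_comp_affine (ht : 0 < t) (v : ℝ) :
    eulerWeight α (t / (1 + t) * v + (1 + t)⁻¹) *
        truncRpow (-α) ((t / (1 + t) * v + (1 + t)⁻¹) * (1 + t) - 1) =
      eulerWeight α v * (1 + t * v) ^ (-α) := by
  have h1t : 0 < 1 + t := by positivity
  rw [show (t / (1 + t) * v + (1 + t)⁻¹) * (1 + t) - 1 = t * v by field_simp; ring,
    truncRpow_mul ht]
  rcases le_or_gt v 0 with hv | hv
  · simp [eulerWeight, truncRpow_of_nonpos hv]
  have htv : 0 < 1 + t * v := by positivity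
  have hcoeff : (1 + t)⁻¹ ^ (-α) * (t / (1 + t)) ^ α * t ^ (-α) = 1 := by
    rw [div_rpow ht.le h1t.le, inv_rpow h1t.le, rpow_neg h1t.le, rpow_neg ht.le]
    field_simp
  rw [eulerWeight, show t / (1 + t) * v + (1 + t)⁻¹ = (1 + t)⁻¹ * (1 + t * v) by field_simp; ring,
    show 1 - (1 + t)⁻¹ * (1 + t * v) = t / (1 + t) * (1 - v) by field_simp; ring,
    truncRpow_mul (inv_pos.2 h1t), truncRpow_mul (div_pos ht h1t), truncRpow_of_pos htv,
    eulerWeight]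
  linear_combination
    ((1 + t * v) ^ (-α) * truncRpow (-α) v * truncRpow α (1 - v)) * hcoeff

theorem integral_eulerWeight_mul_truncRpow (hα : α ∈ Ioo (-1) 1) (ht : 0 < t) :
    ∫ u, eulerWeight α u * truncRpow (-α) (u * (1 + t) - 1) =
      (∫ u, eulerWeight α u) * (t / (1 + t) * Fhyp α t) := by
  have hsubst := integral_comp_mul_add_real
    (fun u ↦ eulerWeight α u * truncRpow (-α) (u * (1 + t) - 1)) (t / (1 + t)) (1 + t)⁻¹
  simp_rw [eulerWeight_mul_truncRpow_comp_affine ht] at hsubst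
  rw [integral_eulerWeight_mul_one_add_mul_rpow hα, abs_of_pos (by positivity), smul_eq_mul,
    ← div_eq_inv_mul, eq_div_iff (by positivity)] at hsubst
  rw [← hsubst]
  ring

theorem truncRpow_affine_div (hu : 0 < u) (t : ℝ) :
    truncRpow (-α) (u * (1 + t) - 1) / ((1 + t) * (1 + t + x)) =
      u ^ 2 * (truncRpow (-α) (u * t + (u - 1)) /
        ((1 + (u * t + (u - 1))) * (1 + x * u + (u * t + (u - 1))))) := by
  rw [show 1 + (u * t + (u - 1)) = u * (1 + t) by ring,
    show 1 + x * u + (u * t + (u - 1)) = u * (1 + t + x) by ring,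
    show u * t + (u - 1) = u * (1 + t) - 1 by ring, mul_mul_mul_comm, ← sq, ← mul_div_assoc,
    mul_div_mul_left _ _ (by positivity)]

theorem one_add_mul_pos (hx : -1 < x) (hu : u ∈ Ioo 0 1) : 0 < 1 + x * u := by
  nlinarith [hu.1, hu.2]

theorem integrable_truncRpow_affine_div (hα : α ∈ Ioo (-1) 1) (hx : -1 < x) (hu : u ∈ Ioo 0 1) :
    Integrable fun t ↦ truncRpow (-α) (u * (1 + t) - 1) / ((1 + t) * (1 + t + x)) := by
  simp_rw [truncRpow_affine_div hu.1]
  refine (integrable_comp_mul_add_real (g := fun s ↦ truncRpow (-α) s /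
    ((1 + s) * (1 + x * u + s))) ?_ hu.1.ne' (u - 1)).const_mul _
  exact integrable_truncRpow_div_iff.2 <|
    integrableOn_Ioi_rpow_neg_div_add_mul_add hα one_pos (one_add_mul_pos hx hu)

theorem integral_truncRpow_affine_div (hu : 0 < u) :
    ∫ t, truncRpow (-α) (u * (1 + t) - 1) / ((1 + t) * (1 + t + x)) =
      u * ∫ s in Ioi (0 : ℝ), s ^ (-α) / ((1 + s) * (1 + x * u + s)) := by
  simp_rw [truncRpow_affine_div hu]
  rw [integral_const_mul, integral_comp_mul_add_real (fun s ↦ truncRpow (-α) s /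
    ((1 + s) * (1 + x * u + s))), integral_truncRpow_div, abs_of_pos (by positivity), smul_eq_mul]
  field_simp

theorem one_sub_one_add_mul_rpow_neg_eq_integral (hα : α ∈ Ioo (-1) 1) (hx : -1 < x)
    (hu : u ∈ Ioo 0 1) :
    1 - (1 + x * u) ^ (-α) = sin (π * α) / π * x *
      ∫ t, truncRpow (-α) (u * (1 + t) - 1) / ((1 + t) * (1 + t + x)) := by
  have hpole := sin_mul_integral_Ioi_rpow_neg_div_add_mul_add hα one_pos (one_add_mul_pos hx hu)
  rw [one_rpow, add_sub_cancel_left] at hpole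
  rw [integral_truncRpow_affine_div hu.1,
    ← mul_div_cancel_left₀ (1 - (1 + x * u) ^ (-α)) pi_ne_zero, ← hpole]
  ring

end InnerIntegrals

/-- The kernel on the `(u, t)`-plane whose integrals in the two orders give the two sides of the
unscaled Fredholm equation at `x`: `u` is the variable of the Euler integral and `t` the variable
of the Fredholm integral. It vanishes for `t ≤ 0`. -/
noncomputable def eulerFredholmKernel (α x u t : ℝ) : ℝ :=
  eulerWeight α u * (truncRpow (-α) (u * (1 + t) - 1) / ((1 + t) * (1 + t + x)))

section Kernel

variable {α x t u : ℝ}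

@[fun_prop]
theorem measurable_eulerFredholmKernel :
    Measurable (Function.uncurry (eulerFredholmKernel α x)) := by
  unfold Function.uncurry eulerFredholmKernel
  fun_prop

theorem eulerFredholmKernel_of_notMem (hu : u ∉ Ioo 0 1) : eulerFredholmKernel α x u t = 0 := by
  rw [eulerFredholmKernel, eulerWeight_of_notMem hu, zero_mul]

theorem eulerFredholmKernel_of_nonpos (ht : t ≤ 0) : eulerFredholmKernel α x u t = 0 := by
  by_cases hu : u ∈ Ioo 0 1
  · rw [eulerFredholmKernel, truncRpow_of_nonpos (by nlinarith [hu.1, hu.2]), zero_div, mul_zero]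
  · exact eulerFredholmKernel_of_notMem hu

theorem eulerFredholmKernel_nonneg (hx : -1 < x) : 0 ≤ eulerFredholmKernel α x u t := by
  rcases le_or_gt t 0 with ht | ht
  · rw [eulerFredholmKernel_of_nonpos ht]
  · have htx : 0 < 1 + t + x := by linarith
    exact mul_nonneg eulerWeight_nonneg (div_nonneg truncRpow_nonneg (by positivity))

theorem eulerFredholmKernel_le (hx : -1 < x) :
    eulerFredholmKernel α x u t ≤ (min (1 + x) 1)⁻¹ * eulerFredholmKernel α 0 u t := by
  rcases le_or_gt t 0 with ht | ht
  · simp [eulerFredholmKernel_of_nonpos ht]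
  have hx' : 0 < 1 + x := by linarith
  have hmin := min_one_mul_one_add_le (c := 1 + x) ht.le
  have hw := eulerWeight_nonneg (α := α) (u := u)
  have hp := truncRpow_nonneg (p := -α) (s := u * (1 + t) - 1)
  calc eulerFredholmKernel α x u t
      ≤ eulerWeight α u * (truncRpow (-α) (u * (1 + t) - 1) /
          ((1 + t) * (min (1 + x) 1 * (1 + t)))) := by
        rw [eulerFredholmKernel]
        gcongr
        linarith
    _ = (min (1 + x) 1)⁻¹ * eulerFredholmKernel α 0 u t := by
        rw [eulerFredholmKernel, add_zero]
        field_simp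

theorem integrable_eulerFredholmKernel_right (hα : α ∈ Ioo (-1) 1) (hx : -1 < x) (u : ℝ) :
    Integrable (eulerFredholmKernel α x u) := by
  by_cases hu : u ∈ Ioo 0 1
  · exact (integrable_truncRpow_affine_div hα hx hu).const_mul _
  · exact (integrable_zero ℝ ℝ volume).congr
      (.of_forall fun _ ↦ (eulerFredholmKernel_of_notMem hu).symm)

theorem integral_eulerFredholmKernel_zero_right (u : ℝ) :
    ∫ t, eulerFredholmKernel α 0 u t =
      eulerWeight α u * u * ∫ s in Ioi (0 : ℝ), s ^ (-α) / ((1 + s) * (1 + s)) := by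
  by_cases hu : u ∈ Ioo 0 1
  · simp only [eulerFredholmKernel]
    rw [integral_const_mul, integral_truncRpow_affine_div hu.1, zero_mul, add_zero, mul_assoc]
  · simp [eulerFredholmKernel_of_notMem hu, eulerWeight_of_notMem hu]

theorem integrable_uncurry_eulerFredholmKernel_zero (hα : α ∈ Ioo (-1) 1) :
    Integrable (Function.uncurry (eulerFredholmKernel α 0)) (volume.prod volume) := by
  rw [integrable_prod_iff (by fun_prop)]
  refine ⟨.of_forall (integrable_eulerFredholmKernel_right hα (by norm_num)), ?_⟩
  simp_rw [Function.uncurry,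
    norm_of_nonneg (eulerFredholmKernel_nonneg (by norm_num : (-1 : ℝ) < 0)),
    integral_eulerFredholmKernel_zero_right]
  exact (integrable_eulerWeight_mul_self hα).mul_const _

theorem integrable_uncurry_eulerFredholmKernel (hα : α ∈ Ioo (-1) 1) (hx : -1 < x) :
    Integrable (Function.uncurry (eulerFredholmKernel α x)) (volume.prod volume) := by
  refine ((integrable_uncurry_eulerFredholmKernel_zero hα).const_mul (min (1 + x) 1)⁻¹).mono'
    (by fun_prop) (.of_forall fun z ↦ ?_)
  rw [Function.uncurry, norm_of_nonneg (eulerFredholmKernel_nonneg hx)]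
  exact eulerFredholmKernel_le hx

theorem integral_eulerFredholmKernel_right (hα : α ∈ Ioo (-1) 1) (hx : -1 < x) (u : ℝ) :
    sin (π * α) / π * x * ∫ t, eulerFredholmKernel α x u t =
      eulerWeight α u - eulerWeight α u * (1 + x * u) ^ (-α) := by
  by_cases hu : u ∈ Ioo 0 1
  · simp only [eulerFredholmKernel]
    rw [integral_const_mul, mul_left_comm,
      ← one_sub_one_add_mul_rpow_neg_eq_integral hα hx hu, mul_one_sub]
  · simp [eulerFredholmKernel_of_notMem hu, eulerWeight_of_notMem hu]

theorem integral_eulerFredholmKernel_left (hα : α ∈ Ioo (-1) 1) (x t : ℝ) :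
    ∫ u, eulerFredholmKernel α x u t = (∫ u, eulerWeight α u) *
      (Ioi 0).indicator (fun t ↦ t * Fhyp α t / ((1 + t) ^ 2 * (1 + t + x))) t := by
  rcases le_or_gt t 0 with ht | ht
  · simp [eulerFredholmKernel_of_nonpos ht, ht]
  · simp only [eulerFredholmKernel, ← mul_div_assoc]
    rw [integral_div, integral_eulerWeight_mul_truncRpow hα ht, indicator_of_mem (mem_Ioi.2 ht),
      mul_div_assoc, div_mul_eq_mul_div, div_div, sq, mul_assoc]

end Kernel

/-! ### The Fredholm equation -/

section Fredholm

variable {α x m lam : ℝ} {J : ℝ → ℝ}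

theorem integrableOn_mul_Fhyp_div (hα : α ∈ Ioo (-1) 1) (hx : -1 < x) :
    IntegrableOn (fun t ↦ t * Fhyp α t / ((1 + t) ^ 2 * (1 + t + x))) (Ioi 0) := by
  have hint := (integrable_uncurry_eulerFredholmKernel hα hx).integral_prod_right
  simp_rw [Function.uncurry, integral_eulerFredholmKernel_left hα] at hint
  rwa [integrable_const_mul_iff (integral_eulerWeight_pos hα).ne'.isUnit,
    integrable_indicator_iff measurableSet_Ioi] at hint

theorem one_sub_Fhyp_eq_integral (hα : α ∈ Ioo (-1) 1) (hx : -1 < x) :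
    1 - Fhyp α x = sin (π * α) / π * x *
      ∫ t in Ioi (0 : ℝ), t * Fhyp α t / ((1 + t) ^ 2 * (1 + t + x)) := by
  have hkernel := integrable_uncurry_eulerFredholmKernel hα hx
  have hpow : Integrable fun u ↦ eulerWeight α u * (1 + x * u) ^ (-α) := by
    refine ((integrable_eulerWeight hα).sub (hkernel.integral_prod_left.const_mul
      (sin (π * α) / π * x))).congr (.of_forall fun u ↦ ?_)
    simp [integral_eulerFredholmKernel_right hα hx]
  apply mul_left_cancel₀ (integral_eulerWeight_pos hα).ne'
  calc (∫ u, eulerWeight α u) * (1 - Fhyp α x)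
      = ∫ u, (eulerWeight α u - eulerWeight α u * (1 + x * u) ^ (-α)) := by
        rw [integral_sub (integrable_eulerWeight hα) hpow,
          integral_eulerWeight_mul_one_add_mul_rpow hα, mul_one_sub]
    _ = sin (π * α) / π * x * ∫ u, ∫ t, eulerFredholmKernel α x u t := by
        simp_rw [← integral_eulerFredholmKernel_right hα hx, integral_const_mul]
    _ = sin (π * α) / π * x * ∫ t, ∫ u, eulerFredholmKernel α x u t := by
        rw [integral_integral_swap hkernel]
    _ = (∫ u, eulerWeight α u) * (sin (π * α) / π * x *
          ∫ t in Ioi (0 : ℝ), t * Fhyp α t / ((1 + t) ^ 2 * (1 + t + x))) := by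
        simp_rw [integral_eulerFredholmKernel_left hα, integral_const_mul,
          integral_indicator measurableSet_Ioi]
        ring

theorem mul_Fhyp_div_comp_scale (hm : m ≠ 0) (t : ℝ) :
    t * Fhyp α (t / m) / ((t + m) ^ 2 * (t + m + x)) = (m ^ 2)⁻¹ *
      (m⁻¹ * t * Fhyp α (m⁻¹ * t) / ((1 + m⁻¹ * t) ^ 2 * (1 + m⁻¹ * t + x / m))) := by
  rw [inv_mul_eq_div m t, show 1 + t / m = (t + m) / m by field_simp; ring, ← add_div]
  field_simp

theorem fredholm_solution_general (hα : α ∈ Ioo (-1) 1) (hlam : sin (π * α) = lam * π)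
    (hm : 0 < m) (hJ : ∀ x, J x = x * Fhyp α (x / m)) (hx : -m < x) :
    IntegrableOn (fun t ↦ J t / ((t + m) ^ 2 * (t + m + x))) (Ioi 0) ∧
      J x = x - lam * x ^ 2 * ∫ t in Ioi (0 : ℝ), J t / ((t + m) ^ 2 * (t + m + x)) := by
  have hxm : -1 < x / m := by rwa [lt_div_iff₀ hm, neg_one_mul]
  have hint := integrableOn_mul_Fhyp_div hα hxm
  have hfred := one_sub_Fhyp_eq_integral hα hxm
  rw [hlam, mul_div_cancel_right₀ _ pi_ne_zero] at hfred
  set h := fun t ↦ t * Fhyp α t / ((1 + t) ^ 2 * (1 + t + x / m))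
  have hscale (t : ℝ) : J t / ((t + m) ^ 2 * (t + m + x)) = (m ^ 2)⁻¹ * h (m⁻¹ * t) := by
    rw [hJ, mul_Fhyp_div_comp_scale hm.ne']
  have hF : Fhyp α (x / m) = 1 - lam * (x / m) * ∫ t in Ioi 0, h t := by linarith
  simp_rw [hscale]
  constructor
  · refine Integrable.const_mul ?_ _
    exact (integrableOn_Ioi_comp_mul_left_iff h 0 (inv_pos.2 hm)).2 (by rwa [mul_zero])
  · rw [integral_const_mul, integral_comp_mul_left_Ioi h 0 (inv_pos.2 hm), mul_zero, inv_inv,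
      smul_eq_mul, hJ, hF]
    field_simp

end Fredholm

theorem arcsin_div_pi_mem_Ioo (y : ℝ) : arcsin y / π ∈ Ioo (-1) 1 := by
  have hpi := pi_pos
  constructor
  · rw [lt_div_iff₀ hpi]
    linarith [neg_pi_div_two_le_arcsin y]
  · rw [div_lt_iff₀ hpi]
    linarith [arcsin_le_pi_div_two y]

theorem sin_pi_mul_arcsin_div_pi {y : ℝ} (hy : y ∈ Icc (-1) 1) : sin (π * (arcsin y / π)) = y := by
  rw [mul_div_cancel₀ _ pi_ne_zero, sin_arcsin hy.1 hy.2]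

theorem mul_pi_mem_Ioo {lam : ℝ} (hlam : lam ∈ Ioo (-(1 / π)) (1 / π)) :
    lam * π ∈ Ioo (-1) 1 := by
  rwa [← neg_div, mem_Ioo, div_lt_iff₀ pi_pos, lt_div_iff₀ pi_pos] at hlam

theorem fredholm_solution (lam : ℝ) (hlam : lam ∈ Set.Ioo (-(1/π)) (1/π))
    (α : ℝ) (hα : α = Real.arcsin (lam * π) / π)
    (μ : ℝ) (hμ : 0 < μ)
    (J : ℝ → ℝ) (hJ : ∀ x, J x = x * Fhyp α (x / μ^2)) :
    ∀ x : ℝ, 0 ≤ x →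
      IntegrableOn (fun t => J t / ((t + μ^2)^2 * (t + μ^2 + x))) (Set.Ioi 0) ∧
      J x = x - lam * x^2 *
        ∫ t in Set.Ioi (0:ℝ), J t / ((t + μ^2)^2 * (t + μ^2 + x)) := by
  have hsin := hα ▸ sin_pi_mul_arcsin_div_pi (Ioo_subset_Icc_self (mul_pi_mem_Ioo hlam))
  exact fun x hx ↦ fredholm_solution_general (hα ▸ arcsin_div_pi_mem_Ioo _) hsin (by positivity) hJ
    (by nlinarith)
end

section
/- For every α ∈ (0,1), the integral ∫₀^∞ F_α(t)/(1+t)² dt converges absolutely and equals 1/(α(1−α)) − π/sin(πα). -/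
open MeasureTheory Real Set

/-!
Put `u = 1 - s` in the Euler integral and, for fixed `s`, `t = w / (s - w)` in the integral over
`t`. Exchanging the two integrations over the triangle `0 < w < s < 1` leaves
`∫ w in (0, 1), (1 - w) ^ (-α) * ∫ s in (w, 1), ((s - w) / (1 - s)) ^ α / s`. With
`z = (s - w) / (1 - s)` and partial fractions the inner integral is a difference of two Stieltjes
transforms of `z ^ (α - 1)`, equal to `B(α, 1 - α) * (1 - w ^ α)`, and the outer one becomes
`B(α, 1 - α) * (B(1, 1 - α) - B(1 + α, 1 - α))`. Everything is nonnegative, so the computation with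
Lebesgue integrals also gives convergence.
-/

section

open ENNReal (ofReal ofReal_mul)
open ProbabilityTheory (beta beta_pos)

theorem integrable_and_integral_eq_of_lintegral_ofReal {X : Type*} [MeasurableSpace X]
    {μ : Measure X} {f : X → ℝ} {c : ℝ} (hfm : AEStronglyMeasurable f μ) (hf : 0 ≤ᵐ[μ] f)
    (hc : 0 ≤ c) (h : ∫⁻ x, ofReal (f x) ∂μ = ofReal c) :
    Integrable f μ ∧ ∫ x, f x ∂μ = c := by
  refine ⟨(lintegral_ofReal_ne_top_iff_integrable hfm hf).1 (h ▸ ENNReal.ofReal_ne_top), ?_⟩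
  rw [integral_eq_lintegral_of_nonneg_ae hf hfm, h, ENNReal.toReal_ofReal hc]

theorem lintegral_lintegral_Ioo_swap {X : Type*} [LinearOrder X] [TopologicalSpace X]
    [OrderClosedTopology X] [SecondCountableTopology X] [MeasurableSpace X]
    [OpensMeasurableSpace X] {μ ν : Measure X} [SFinite μ] [SFinite ν] {a b : X}
    {f : X → X → ENNReal} (hf : Measurable (Function.uncurry f)) :
    ∫⁻ x in Ioo a b, ∫⁻ y in Ioo a x, f x y ∂ν ∂μ =
      ∫⁻ y in Ioo a b, ∫⁻ x in Ioo y b, f x y ∂μ ∂ν := by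
  have restrict_y : ∀ x ∈ Ioo a b,
      ∫⁻ y in Ioo a x, f x y ∂ν = ∫⁻ y in Ioo a b, (Iio x).indicator (f x) y ∂ν := fun x hx => by
    rw [setLIntegral_indicator measurableSet_Iio, inter_comm, Ioo_inter_Iio, min_eq_right hx.2.le]
  have restrict_x : ∀ y ∈ Ioo a b,
      ∫⁻ x in Ioo y b, f x y ∂μ = ∫⁻ x in Ioo a b, (Ioi y).indicator (f · y) x ∂μ := fun y hy => by
    rw [setLIntegral_indicator measurableSet_Ioi, inter_comm, Ioo_inter_Ioi, max_eq_right hy.1.le]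
  rw [setLIntegral_congr_fun measurableSet_Ioo restrict_y,
    setLIntegral_congr_fun measurableSet_Ioo restrict_x]
  exact lintegral_lintegral_swap
    (hf.indicator (measurableSet_lt measurable_snd measurable_fst)).aemeasurable

/-- The substitution `z = c (x - a) / (b - x)`. -/
theorem lintegral_Ioo_eq_lintegral_Ioi {a b c : ℝ} (hab : a < b) (hc : 0 < c)
    (f : ℝ → ENNReal) :
    ∫⁻ x in Ioo a b, f x =
      ∫⁻ z in Ioi 0, ofReal (c * (b - a) / (z + c) ^ 2) * f ((b * z + c * a) / (z + c)) := by
  have hba : 0 < b - a := sub_pos.2 hab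
  have image_eq : (fun z => (b * z + c * a) / (z + c)) '' Ioi 0 = Ioo a b := by
    ext x
    simp only [mem_image, mem_Ioi, mem_Ioo]
    constructor
    · rintro ⟨z, hz, rfl⟩
      constructor
      · rw [lt_div_iff₀ (by positivity)]
        nlinarith
      · rw [div_lt_iff₀ (by positivity)]
        nlinarith
    · rintro ⟨hax, hxb⟩
      have hbx : 0 < b - x := sub_pos.2 hxb
      refine ⟨c * (x - a) / (b - x), div_pos (mul_pos hc (sub_pos.2 hax)) hbx, ?_⟩
      field_simp
      ring
  have hderiv : ∀ z ∈ Ioi (0 : ℝ), HasDerivAt (fun z => (b * z + c * a) / (z + c))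
      (c * (b - a) / (z + c) ^ 2) z := fun z (hz : 0 < z) => by
    convert! (((hasDerivAt_id z).const_mul b).add_const (c * a)).div
      ((hasDerivAt_id z).add_const c) (by positivity : z + c ≠ 0) using 1
    simp only [id]
    ring
  have hmono : MonotoneOn (fun z => (b * z + c * a) / (z + c)) (Ioi 0) :=
    fun z (hz : 0 < z) y (hy : 0 < y) hzy => by
      simp only
      rw [div_le_div_iff₀ (by positivity) (by positivity)]
      nlinarith [mul_nonneg (mul_pos hc hba).le (sub_nonneg.2 hzy)]
  rw [← image_eq, lintegral_image_eq_lintegral_deriv_mul_of_monotoneOn measurableSet_Ioi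
    (fun z hz => (hderiv z hz).hasDerivWithinAt) hmono]

theorem beta_one_left {b : ℝ} (hb : 0 < b) : beta 1 b = 1 / b := by
  have := Gamma_pos_of_pos hb
  rw [beta, add_comm, Gamma_add_one hb.ne', Gamma_one]
  field_simp

theorem beta_self_one_sub (a : ℝ) : beta a (1 - a) = π / sin (π * a) := by
  rw [beta, Gamma_mul_Gamma_one_sub, add_sub_cancel, Gamma_one, div_one]

theorem beta_one_add_left {a b : ℝ} (ha : a ≠ 0) (hab : a + b ≠ 0) :
    beta (1 + a) b = a / (a + b) * beta a b := by
  rw [beta, beta, add_assoc, add_comm 1 a, add_comm 1 (a + b), Gamma_add_one ha,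
    Gamma_add_one hab]
  field_simp

theorem Gamma_one_sub_mul_Gamma_one_add {a : ℝ} (ha : a ≠ 0) :
    Gamma (1 - a) * Gamma (1 + a) = a * beta a (1 - a) := by
  rw [beta_self_one_sub, ← Gamma_mul_Gamma_one_sub, add_comm, Gamma_add_one ha]
  ring

theorem lintegral_rpow_mul_one_sub_rpow {p q : ℝ} (hp : 0 < p) (hq : 0 < q) :
    ∫⁻ x in Ioo 0 1, ofReal (x ^ (p - 1) * (1 - x) ^ (q - 1)) = ofReal (beta p q) := by
  have hB := beta_pos hp hq
  calc ∫⁻ x in Ioo 0 1, ofReal (x ^ (p - 1) * (1 - x) ^ (q - 1))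
      = ∫⁻ x in Ioo 0 1, ofReal (beta p q) *
          ofReal (1 / beta p q * x ^ (p - 1) * (1 - x) ^ (q - 1)) := by
        refine lintegral_congr fun x => ?_
        rw [← ofReal_mul hB.le]
        field_simp
    _ = ofReal (beta p q) := by
        rw [lintegral_const_mul' _ _ ENNReal.ofReal_ne_top,
          ← ProbabilityTheory.lintegral_betaPDF,
          ProbabilityTheory.lintegral_betaPDF_eq_one hp hq, mul_one]

theorem integrableOn_and_integral_rpow_mul_one_sub_rpow {p q : ℝ} (hp : 0 < p) (hq : 0 < q) :
    IntegrableOn (fun x : ℝ => x ^ (p - 1) * (1 - x) ^ (q - 1)) (Ioo 0 1) ∧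
      ∫ x in Ioo (0 : ℝ) 1, x ^ (p - 1) * (1 - x) ^ (q - 1) = beta p q :=
  integrable_and_integral_eq_of_lintegral_ofReal (by fun_prop)
    (ae_restrict_of_forall_mem measurableSet_Ioo fun _ hx =>
      mul_nonneg (rpow_nonneg hx.1.le _) (rpow_nonneg (sub_nonneg.2 hx.2.le) _))
    (beta_pos hp hq).le (lintegral_rpow_mul_one_sub_rpow hp hq)

theorem lintegral_rpow_div_add_rpow {p q c : ℝ} (hp : 0 < p) (hq : 0 < q) (hc : 0 < c) :
    ∫⁻ z in Ioi 0, ofReal (z ^ (p - 1) / (z + c) ^ (p + q)) = ofReal (c ^ (-q) * beta p q) := by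
  rw [ofReal_mul (by positivity), ← lintegral_rpow_mul_one_sub_rpow hp hq,
    ← lintegral_const_mul' _ _ ENNReal.ofReal_ne_top, lintegral_Ioo_eq_lintegral_Ioi one_pos hc]
  refine setLIntegral_congr_fun measurableSet_Ioi fun z (hz : 0 < z) => ?_
  have hzc : 0 < z + c := by positivity
  have one_sub_eq : 1 - (1 * z + c * 0) / (z + c) = c / (z + c) := by field_simp; ring
  rw [one_sub_eq, ← ofReal_mul (by positivity), ← ofReal_mul (by positivity), one_mul, mul_zero,
    add_zero, div_rpow hz.le hzc.le, div_rpow hc.le hzc.le, rpow_sub_one hzc.ne',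
    rpow_sub_one hzc.ne', rpow_sub_one hc.ne', rpow_add hzc, rpow_neg hc.le]
  congr 1
  field_simp
  ring

theorem integrableOn_and_integral_rpow_div_add {a c : ℝ} (ha : a ∈ Ioo (0 : ℝ) 1) (hc : 0 < c) :
    IntegrableOn (fun z : ℝ => z ^ (a - 1) / (z + c)) (Ioi 0) ∧
      ∫ z in Ioi (0 : ℝ), z ^ (a - 1) / (z + c) = c ^ (a - 1) * beta a (1 - a) := by
  have ha' : 0 < 1 - a := sub_pos.2 ha.2
  refine integrable_and_integral_eq_of_lintegral_ofReal
    (Measurable.aestronglyMeasurable (by fun_prop))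
    (ae_restrict_of_forall_mem measurableSet_Ioi fun z (hz : 0 < z) => by positivity)
    (mul_nonneg (by positivity) (beta_pos ha.1 ha').le) ?_
  simpa only [add_sub_cancel, rpow_one, neg_sub] using lintegral_rpow_div_add_rpow ha.1 ha' hc

theorem lintegral_rpow_mul_div_add_one_mul_add {a r : ℝ} (ha : a ∈ Ioo (0 : ℝ) 1)
    (hr : r ∈ Ioo (0 : ℝ) 1) :
    ∫⁻ z in Ioi 0, ofReal (z ^ a * (1 - r) / ((z + 1) * (z + r))) =
      ofReal (beta a (1 - a) * (1 - r ^ a)) := by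
  have hr0 := hr.1
  have hr1 : 0 < 1 - r := sub_pos.2 hr.2
  obtain ⟨int_one, eq_one⟩ := integrableOn_and_integral_rpow_div_add ha one_pos
  obtain ⟨int_r, eq_r⟩ := integrableOn_and_integral_rpow_div_add ha hr0
  have partial_fractions : EqOn (fun z => z ^ a * (1 - r) / ((z + 1) * (z + r)))
      (fun z => z ^ (a - 1) / (z + 1) - r * (z ^ (a - 1) / (z + r))) (Ioi 0) :=
    fun z (hz : 0 < z) => by
      simp only [rpow_sub_one hz.ne']
      field_simp
      ring
  have integrable : IntegrableOn (fun z => z ^ a * (1 - r) / ((z + 1) * (z + r))) (Ioi 0) :=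
    (integrableOn_congr_fun partial_fractions measurableSet_Ioi).2
      (int_one.sub (int_r.const_mul r))
  rw [← ofReal_integral_eq_lintegral_ofReal integrable <|
      ae_restrict_of_forall_mem measurableSet_Ioi fun z (hz : 0 < z) => by
        simp only [Pi.zero_apply]; positivity,
    setIntegral_congr_fun measurableSet_Ioi partial_fractions,
    integral_sub int_one (int_r.const_mul r), integral_const_mul, eq_one, eq_r, one_rpow,
    rpow_sub_one hr0.ne']
  congr 1
  field_simp

theorem lintegral_div_rpow_div {α a b : ℝ} (hα : α ∈ Ioo (0 : ℝ) 1) (ha : 0 < a) (hab : a < b) :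
    ∫⁻ x in Ioo a b, ofReal (((x - a) / (b - x)) ^ α / x) =
      ofReal (beta α (1 - α) * (1 - (a / b) ^ α)) := by
  have hb : 0 < b := ha.trans hab
  have hba : 0 < b - a := sub_pos.2 hab
  rw [← lintegral_rpow_mul_div_add_one_mul_add hα ⟨div_pos ha hb, (div_lt_one hb).2 hab⟩,
    lintegral_Ioo_eq_lintegral_Ioi hab one_pos]
  refine setLIntegral_congr_fun measurableSet_Ioi fun z (hz : 0 < z) => ?_
  have sub_left_eq : (b * z + 1 * a) / (z + 1) - a = z * (b - a) / (z + 1) := by field_simp; ring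
  have sub_right_eq : b - (b * z + 1 * a) / (z + 1) = (b - a) / (z + 1) := by field_simp; ring
  have ratio_eq : z * (b - a) / (z + 1) / ((b - a) / (z + 1)) = z := by field_simp
  rw [sub_left_eq, sub_right_eq, ratio_eq, ← ofReal_mul (by positivity)]
  congr 1
  field_simp

theorem integrableOn_and_integral_one_sub_rpow_mul {p q : ℝ} (hp : -1 < p) (hq : 0 < q) :
    IntegrableOn (fun x : ℝ => (1 - x) ^ (q - 1) * (1 - x ^ p)) (Ioo 0 1) ∧
      ∫ x in Ioo (0 : ℝ) 1, (1 - x) ^ (q - 1) * (1 - x ^ p) = beta 1 q - beta (1 + p) q := by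
  obtain ⟨int_one, eq_one⟩ := integrableOn_and_integral_rpow_mul_one_sub_rpow one_pos hq
  obtain ⟨int_add, eq_add⟩ :=
    integrableOn_and_integral_rpow_mul_one_sub_rpow (p := 1 + p) (by linarith) hq
  have expand : (fun x : ℝ => (1 - x) ^ (q - 1) * (1 - x ^ p)) = fun x =>
      x ^ ((1 : ℝ) - 1) * (1 - x) ^ (q - 1) - x ^ (1 + p - 1) * (1 - x) ^ (q - 1) := by
    funext x
    rw [sub_self, rpow_zero, add_sub_cancel_left]
    ring
  rw [expand, integral_sub int_one int_add, eq_one, eq_add]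
  exact ⟨int_one.sub int_add, rfl⟩

theorem one_sub_rpow_mul_nonneg {p q x : ℝ} (hp : 0 ≤ p) (hx : x ∈ Ioo (0 : ℝ) 1) :
    0 ≤ (1 - x) ^ q * (1 - x ^ p) :=
  mul_nonneg (rpow_nonneg (sub_nonneg.2 hx.2.le) _)
    (sub_nonneg.2 (rpow_le_one hx.1.le hx.2.le hp))

theorem beta_one_add_le {p q : ℝ} (hp : 0 ≤ p) (hq : 0 < q) : beta (1 + p) q ≤ beta 1 q := by
  rw [← sub_nonneg, ← (integrableOn_and_integral_one_sub_rpow_mul (by linarith) hq).2]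
  exact setIntegral_nonneg measurableSet_Ioo fun x hx => one_sub_rpow_mul_nonneg hp hx

/-- The integrand of the Euler integral of `Fhyp α t` after the reflection `u = 1 - s`, written as a
single power so that later substitutions act on its base only. -/
noncomputable def eulerIntegrand (α t s : ℝ) : ℝ :=
  (s / ((1 - s) * (1 + t * (1 - s)))) ^ α

theorem measurable_eulerIntegrand_div (α : ℝ) :
    Measurable fun p : ℝ × ℝ => eulerIntegrand α p.1 p.2 / (1 + p.1) ^ 2 := by
  unfold eulerIntegrand
  fun_prop

theorem eulerIntegrand_nonneg (α : ℝ) {t s : ℝ} (ht : 0 ≤ t) (hs : s ∈ Ioo (0 : ℝ) 1) :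
    0 ≤ eulerIntegrand α t s := by
  have hs0 := hs.1
  have hs1 : 0 < 1 - s := sub_pos.2 hs.2
  exact rpow_nonneg (by positivity) α

theorem Fhyp_eq_integral_eulerIntegrand {α t : ℝ} (ht : 0 ≤ t) :
    Fhyp α t = 1 / (Gamma (1 - α) * Gamma (1 + α)) *
      ∫ s in Ioo (0 : ℝ) 1, eulerIntegrand α t s := by
  have reflect := intervalIntegral.integral_comp_sub_left (a := 0) (b := 1)
    (fun u : ℝ => u ^ (-α) * (1 - u) ^ α * (1 + t * u) ^ (-α)) 1
  rw [sub_self, sub_zero] at reflect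
  rw [Fhyp, ← reflect, intervalIntegral.integral_of_le zero_le_one, integral_Ioc_eq_integral_Ioo]
  congr 1
  refine setIntegral_congr_fun measurableSet_Ioo fun s hs => ?_
  have hs1 : 0 < 1 - s := sub_pos.2 hs.2
  have hts : 0 < 1 + t * (1 - s) := by positivity
  rw [eulerIntegrand, div_rpow hs.1.le (by positivity), mul_rpow hs1.le hts.le, rpow_neg hs1.le,
    rpow_neg hts.le, sub_sub_cancel]
  field_simp

theorem lintegral_eulerIntegrand_div (α : ℝ) {s : ℝ} (hs : s ∈ Ioo (0 : ℝ) 1) :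
    ∫⁻ t in Ioi 0, ofReal (eulerIntegrand α t s / (1 + t) ^ 2) =
      ∫⁻ w in Ioo 0 s, ofReal (((s - w) / ((1 - s) * (1 - w))) ^ α / s) := by
  have hs0 := hs.1
  have hs1 : 0 < 1 - s := sub_pos.2 hs.2
  rw [lintegral_Ioo_eq_lintegral_Ioi hs0 one_pos]
  refine setLIntegral_congr_fun measurableSet_Ioi fun t (ht : 0 < t) => ?_
  have sub_eq : s - (s * t + 1 * 0) / (t + 1) = s / (t + 1) := by field_simp; ring
  have one_sub_eq : 1 - (s * t + 1 * 0) / (t + 1) = (1 + t * (1 - s)) / (t + 1) := by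
    field_simp; ring
  have base_eq : s / (t + 1) / ((1 - s) * ((1 + t * (1 - s)) / (t + 1))) =
      s / ((1 - s) * (1 + t * (1 - s))) := by field_simp
  rw [sub_eq, one_sub_eq, base_eq, ← ofReal_mul (by positivity), eulerIntegrand]
  congr 1
  field_simp
  ring

theorem lintegral_div_mul_rpow_div {α w : ℝ} (hα : α ∈ Ioo (0 : ℝ) 1) (hw : w ∈ Ioo (0 : ℝ) 1) :
    ∫⁻ s in Ioo w 1, ofReal (((s - w) / ((1 - s) * (1 - w))) ^ α / s) =
      ofReal (beta α (1 - α) * ((1 - w) ^ (-α) * (1 - w ^ α))) := by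
  have hw1 : 0 < 1 - w := sub_pos.2 hw.2
  have base := lintegral_div_rpow_div hα hw.1 hw.2
  rw [div_one] at base
  rw [mul_left_comm, ofReal_mul (by positivity), ← base,
    ← lintegral_const_mul' _ _ ENNReal.ofReal_ne_top]
  refine setLIntegral_congr_fun measurableSet_Ioo fun s hs => ?_
  have hsw : 0 < s - w := sub_pos.2 hs.1
  have hs1 : 0 < 1 - s := sub_pos.2 hs.2
  rw [← ofReal_mul (by positivity), rpow_neg hw1.le, ← div_div,
    div_rpow (div_pos hsw hs1).le hw1.le]
  field_simp

theorem lintegral_lintegral_eulerIntegrand_div {α : ℝ} (hα : α ∈ Ioo (0 : ℝ) 1) :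
    ∫⁻ t in Ioi 0, ∫⁻ s in Ioo 0 1, ofReal (eulerIntegrand α t s / (1 + t) ^ 2) =
      ofReal (beta α (1 - α) * (beta 1 (1 - α) - beta (1 + α) (1 - α))) := by
  have hα1 : 0 < 1 - α := sub_pos.2 hα.2
  obtain ⟨outer_integrable, outer_integral⟩ :=
    integrableOn_and_integral_one_sub_rpow_mul (neg_one_lt_zero.trans hα.1) hα1
  rw [sub_sub_cancel_left] at outer_integral
  simp only [sub_sub_cancel_left] at outer_integrable
  calc ∫⁻ t in Ioi 0, ∫⁻ s in Ioo 0 1, ofReal (eulerIntegrand α t s / (1 + t) ^ 2)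
      = ∫⁻ s in Ioo 0 1, ∫⁻ t in Ioi 0, ofReal (eulerIntegrand α t s / (1 + t) ^ 2) :=
        lintegral_lintegral_swap (measurable_eulerIntegrand_div α).ennreal_ofReal.aemeasurable
    _ = ∫⁻ s in Ioo 0 1, ∫⁻ w in Ioo 0 s, ofReal (((s - w) / ((1 - s) * (1 - w))) ^ α / s) :=
        setLIntegral_congr_fun measurableSet_Ioo fun _ => lintegral_eulerIntegrand_div α
    _ = ∫⁻ w in Ioo 0 1, ∫⁻ s in Ioo w 1, ofReal (((s - w) / ((1 - s) * (1 - w))) ^ α / s) :=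
        lintegral_lintegral_Ioo_swap (by unfold Function.uncurry; fun_prop)
    _ = ∫⁻ w in Ioo 0 1, ofReal (beta α (1 - α) * ((1 - w) ^ (-α) * (1 - w ^ α))) :=
        setLIntegral_congr_fun measurableSet_Ioo fun _ => lintegral_div_mul_rpow_div hα
    _ = ofReal (∫ w in Ioo 0 1, beta α (1 - α) * ((1 - w) ^ (-α) * (1 - w ^ α))) :=
        (ofReal_integral_eq_lintegral_ofReal (outer_integrable.const_mul _) <|
          ae_restrict_of_forall_mem measurableSet_Ioo fun _ hw =>
            mul_nonneg (beta_pos hα.1 hα1).le (one_sub_rpow_mul_nonneg hα.1.le hw)).symm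
    _ = ofReal (beta α (1 - α) * (beta 1 (1 - α) - beta (1 + α) (1 - α))) := by
        rw [integral_const_mul, outer_integral]

theorem integrable_and_integral_eulerIntegrand_div {α : ℝ} (hα : α ∈ Ioo (0 : ℝ) 1) :
    Integrable (fun p : ℝ × ℝ => eulerIntegrand α p.1 p.2 / (1 + p.1) ^ 2)
        ((volume.restrict (Ioi 0)).prod (volume.restrict (Ioo 0 1))) ∧
      ∫ p : ℝ × ℝ, eulerIntegrand α p.1 p.2 / (1 + p.1) ^ 2
          ∂(volume.restrict (Ioi 0)).prod (volume.restrict (Ioo 0 1)) =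
        beta α (1 - α) * (beta 1 (1 - α) - beta (1 + α) (1 - α)) := by
  have hα1 : 0 < 1 - α := sub_pos.2 hα.2
  have hmeas := measurable_eulerIntegrand_div α
  refine integrable_and_integral_eq_of_lintegral_ofReal hmeas.aestronglyMeasurable ?_
    (mul_nonneg (beta_pos hα.1 hα1).le (sub_nonneg.2 (beta_one_add_le hα.1.le hα1))) ?_
  · rw [Measure.prod_restrict]
    exact ae_restrict_of_forall_mem (measurableSet_Ioi.prod measurableSet_Ioo)
      fun p ⟨(ht : 0 < p.1), hs⟩ => div_nonneg (eulerIntegrand_nonneg α ht.le hs) (sq_nonneg _)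
  · rw [lintegral_prod _ hmeas.ennreal_ofReal.aemeasurable]
    exact lintegral_lintegral_eulerIntegrand_div hα

end

theorem boundary_integral (α : ℝ) (hα : α ∈ Set.Ioo (0:ℝ) 1) :
    IntegrableOn (fun t => Fhyp α t / (1 + t)^2) (Set.Ioi 0) ∧
    ∫ t in Set.Ioi (0:ℝ), Fhyp α t / (1 + t)^2 =
      1 / (α * (1 - α)) - π / Real.sin (π * α) := by
  have hα1 : 0 < 1 - α := sub_pos.2 hα.2
  have hβ : 0 < ProbabilityTheory.beta α (1 - α) := ProbabilityTheory.beta_pos hα.1 hα1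
  have Fhyp_div : ∀ t ∈ Ioi (0 : ℝ), Fhyp α t / (1 + t) ^ 2 =
      1 / (Gamma (1 - α) * Gamma (1 + α)) *
        ∫ s in Ioo (0 : ℝ) 1, eulerIntegrand α t s / (1 + t) ^ 2 := fun t (ht : 0 < t) => by
    rw [Fhyp_eq_integral_eulerIntegrand ht.le, mul_div_assoc, integral_div]
  obtain ⟨hint, heq⟩ := integrable_and_integral_eulerIntegrand_div hα
  rw [integrableOn_congr_fun Fhyp_div measurableSet_Ioi,
    setIntegral_congr_fun measurableSet_Ioi Fhyp_div]
  refine ⟨hint.integral_prod_left.const_mul _, ?_⟩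
  rw [integral_const_mul, ← integral_prod _ hint, heq, Gamma_one_sub_mul_Gamma_one_add hα.1.ne',
    beta_one_left hα1, beta_one_add_left hα.1.ne' (by simp), add_sub_cancel, div_one,
    ← beta_self_one_sub]
  have hα0 := hα.1
  field_simp
end

section
/- Let λ ∈ (−1/π, 1/π), set α = arcsin(λπ)/π, let μ > 0, and define J(x) := x·F_α(x/μ²) for x ≥ 0. Then for every real p, the integral ∫₀^∞ J(t)·(1+t)^{−p/2} dt is finite if and only if p > 4 − 2α. Consequently the spectral dimension inf{ p : ∫₀^∞ J(t)(1+t)^{−p/2} dt < ∞ } equals 4 − 2·arcsin(λπ)/π. -/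
open MeasureTheory Real Set

/-! Homogenise the Euler integral to `E(a, b) = ∫₀¹ u^(-α) (1-u)^α (a + bu)^(-α) du`. It is
continuous on the closed quadrant away from the origin and homogeneous of degree `-α`, so
`x^α E(1, x) = E(1/x, 1) → E(0, 1) = B(1-2α, 1+α)` as `x → ∞`, which is finite and positive for
`-1 < α < 1/2`. Hence `F_α(x)` is of exact order `x^(-α)`, and `J(t) (1+t)^(-p/2)`, which is
continuous on `[0, ∞)` and of exact order `t^(1-α-p/2)` at infinity, is integrable if and only if
`1 - α - p/2 < -1`. -/

open Filter Topology Asymptotics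

section BetaIntegral

variable {r s : ℝ}

lemma ofReal_rpow_mul_one_sub_rpow_s6 {u : ℝ} (hu : u ∈ Icc 0 1) :
    ((u ^ r * (1 - u) ^ s : ℝ) : ℂ) =
      (u : ℂ) ^ (((r + 1 : ℝ) : ℂ) - 1) * (1 - (u : ℂ)) ^ (((s + 1 : ℝ) : ℂ) - 1) := by
  rw [Complex.ofReal_mul, Complex.ofReal_cpow hu.1, Complex.ofReal_cpow (sub_nonneg.2 hu.2)]
  push_cast
  simp only [add_sub_cancel_right]

lemma intervalIntegrable_rpow_mul_one_sub_rpow (hr : -1 < r) (hs : -1 < s) :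
    IntervalIntegrable (fun u : ℝ => u ^ r * (1 - u) ^ s) volume 0 1 := by
  have hbeta := Complex.betaIntegral_convergent (u := ((r + 1 : ℝ) : ℂ)) (v := ((s + 1 : ℝ) : ℂ))
    (by rw [Complex.ofReal_re]; linarith) (by rw [Complex.ofReal_re]; linarith)
  rw [intervalIntegrable_iff_integrableOn_Icc_of_le zero_le_one] at hbeta ⊢
  refine IntegrableOn.congr_fun hbeta.re (fun u hu => ?_) measurableSet_Icc
  rw [← ofReal_rpow_mul_one_sub_rpow_s6 hu]
  exact Complex.ofReal_re _

lemma integral_rpow_mul_one_sub_rpow (hr : -1 < r) (hs : -1 < s) :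
    ∫ u in (0 : ℝ)..1, u ^ r * (1 - u) ^ s = ProbabilityTheory.beta (r + 1) (s + 1) := by
  rw [ProbabilityTheory.beta_eq_betaIntegralReal _ _ (by linarith) (by linarith),
    Complex.betaIntegral, ← Complex.ofReal_re (∫ u in (0 : ℝ)..1, u ^ r * (1 - u) ^ s),
    ← intervalIntegral.integral_ofReal]
  congr 1
  refine intervalIntegral.integral_congr fun u hu => ?_
  rw [uIcc_of_le zero_le_one] at hu
  exact ofReal_rpow_mul_one_sub_rpow_s6 hu

end BetaIntegral

section EulerIntegral

lemma rpow_le_rpow_add_rpow {a b y : ℝ} (ha : 0 < a) (hay : a ≤ y) (hyb : y ≤ b) (q : ℝ) :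
    y ^ q ≤ a ^ q + b ^ q := by
  have hy : 0 < y := ha.trans_le hay
  rcases le_total 0 q with hq | hq
  · exact (rpow_le_rpow hy.le hyb hq).trans (le_add_of_nonneg_left (rpow_nonneg ha.le q))
  · exact (rpow_le_rpow_of_nonpos ha hay hq).trans
      (le_add_of_nonneg_right (rpow_nonneg (hy.le.trans hyb) q))

/-- The unnormalised Euler integral of `₂F₁(-q, r + 1; r + s + 2; -x)`, with its linear factor
`1 + x * u` homogenised to `a + b * u`, so that `x → ∞` becomes `(a, b) → (0, 1)`. -/
noncomputable def eulerIntegral (r s q a b : ℝ) : ℝ :=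
  ∫ u in (0 : ℝ)..1, u ^ r * (1 - u) ^ s * (a + b * u) ^ q

variable {r s q : ℝ}

lemma eulerIntegral_mul_mul {a b c : ℝ} (hc : 0 ≤ c) (ha : 0 ≤ a) (hb : 0 ≤ b) :
    eulerIntegral r s q (c * a) (c * b) = c ^ q * eulerIntegral r s q a b := by
  rw [eulerIntegral, eulerIntegral, ← intervalIntegral.integral_const_mul]
  refine intervalIntegral.integral_congr fun u hu => ?_
  rw [uIcc_of_le zero_le_one] at hu
  have hlin : 0 ≤ a + b * u := add_nonneg ha (mul_nonneg hb hu.1)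
  simp only [mul_assoc c b u, ← mul_add, mul_rpow hc hlin]
  ring

lemma eulerIntegral_zero_one (hs : -1 < s) (hrq : -1 < r + q) :
    eulerIntegral r s q 0 1 = ProbabilityTheory.beta (r + q + 1) (s + 1) := by
  rw [eulerIntegral, ← integral_rpow_mul_one_sub_rpow hrq hs]
  refine intervalIntegral.integral_congr_Ioo_of_le zero_le_one fun u hu => ?_
  simp only [zero_add, one_mul, rpow_add hu.1]
  ring

lemma norm_eulerIntegrand_le {a b m M u : ℝ} (ha : 0 ≤ a) (hb : 0 ≤ b) (hm : 0 < m)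
    (hmab : m ≤ a + b) (habM : a + b ≤ M) (hu : u ∈ Ioc 0 1) :
    ‖u ^ r * (1 - u) ^ s * (a + b * u) ^ q‖ ≤
      m ^ q * (u ^ (r + q) * (1 - u) ^ s) + M ^ q * (u ^ r * (1 - u) ^ s) := by
  have hlower : m * u ≤ a + b * u := by
    nlinarith [mul_le_mul_of_nonneg_right hmab hu.1.le, mul_le_mul_of_nonneg_left hu.2 ha]
  have hupper : a + b * u ≤ M := by
    nlinarith [mul_le_mul_of_nonneg_left hu.2 hb]
  have hweight : 0 ≤ u ^ r * (1 - u) ^ s :=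
    mul_nonneg (rpow_nonneg hu.1.le r) (rpow_nonneg (sub_nonneg.2 hu.2) s)
  have hlin : 0 ≤ a + b * u := (mul_nonneg hm.le hu.1.le).trans hlower
  calc ‖u ^ r * (1 - u) ^ s * (a + b * u) ^ q‖
      = u ^ r * (1 - u) ^ s * (a + b * u) ^ q :=
        norm_of_nonneg (mul_nonneg hweight (rpow_nonneg hlin q))
    _ ≤ u ^ r * (1 - u) ^ s * ((m * u) ^ q + M ^ q) :=
        mul_le_mul_of_nonneg_left
          (rpow_le_rpow_add_rpow (mul_pos hm hu.1) hlower hupper q) hweight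
    _ = m ^ q * (u ^ (r + q) * (1 - u) ^ s) + M ^ q * (u ^ r * (1 - u) ^ s) := by
        rw [mul_rpow hm.le hu.1.le, rpow_add hu.1]
        ring

lemma continuousOn_eulerIntegral (hr : -1 < r) (hs : -1 < s) (hrq : -1 < r + q) :
    ContinuousOn (fun v : ℝ × ℝ => eulerIntegral r s q v.1 v.2)
      {v | 0 ≤ v.1 ∧ 0 ≤ v.2 ∧ 0 < v.1 + v.2} := by
  rintro ⟨A, B⟩ ⟨hA, -, hAB : 0 < A + B⟩
  have hsum : ContinuousAt (fun v : ℝ × ℝ => v.1 + v.2) (A, B) := by fun_prop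
  have hlarge : ∀ᶠ v : ℝ × ℝ in 𝓝 (A, B), (A + B) / 2 < v.1 + v.2 :=
    hsum.eventually_const_lt (half_lt_self hAB)
  have hsmall : ∀ᶠ v : ℝ × ℝ in 𝓝 (A, B), v.1 + v.2 < A + B + 1 :=
    hsum.eventually_lt_const (lt_add_one _)
  refine intervalIntegral.tendsto_integral_filter_of_dominated_convergence
    (fun u => ((A + B) / 2) ^ q * (u ^ (r + q) * (1 - u) ^ s)
      + (A + B + 1) ^ q * (u ^ r * (1 - u) ^ s))
    (.of_forall fun v => Measurable.aestronglyMeasurable (by fun_prop)) ?_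
    (((intervalIntegrable_rpow_mul_one_sub_rpow hrq hs).const_mul _).add
      ((intervalIntegrable_rpow_mul_one_sub_rpow hr hs).const_mul _)) ?_
  · filter_upwards [self_mem_nhdsWithin, mem_nhdsWithin_of_mem_nhds hlarge,
      mem_nhdsWithin_of_mem_nhds hsmall] with v ⟨hv₁, hv₂, _⟩ hvlarge hvsmall
    refine .of_forall fun u hu => ?_
    rw [uIoc_of_le zero_le_one] at hu
    exact norm_eulerIntegrand_le hv₁ hv₂ (half_pos hAB) hvlarge.le hvsmall.le hu
  · refine .of_forall fun u hu => ?_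
    rw [uIoc_of_le zero_le_one] at hu
    have hlin : 0 < A + B * u := by
      nlinarith [mul_pos hAB hu.1, mul_le_mul_of_nonneg_left hu.2 hA]
    have hcont : ContinuousAt (fun v : ℝ × ℝ => (v.1 + v.2 * u) ^ q) (A, B) :=
      ContinuousAt.rpow_const (by fun_prop) (.inl hlin.ne')
    exact (hcont.const_mul _).continuousWithinAt

end EulerIntegral

section Hypergeometric

variable {α : ℝ}

lemma Fhyp_eq_eulerIntegral (α x : ℝ) :
    Fhyp α x = 1 / (Gamma (1 - α) * Gamma (1 + α)) * eulerIntegral (-α) α (-α) 1 x :=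
  rfl

lemma continuousOn_Fhyp (hα : α ∈ Ioo (-1) (1 / 2)) : ContinuousOn (Fhyp α) (Ici 0) := by
  have hE := continuousOn_eulerIntegral (r := -α) (s := α) (q := -α)
    (by linarith [hα.2]) hα.1 (by linarith [hα.2])
  refine (hE.comp (f := fun x => ((1 : ℝ), x)) (by fun_prop) fun x hx => ?_).const_mul _
  exact ⟨zero_le_one, hx, add_pos_of_pos_of_nonneg one_pos hx⟩

lemma tendsto_rpow_mul_Fhyp_atTop (hα : α ∈ Ioo (-1) (1 / 2)) :
    Tendsto (fun x => x ^ α * Fhyp α x) atTop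
      (𝓝 (Gamma (1 - 2 * α) / (Gamma (1 - α) * Gamma (2 - α)))) := by
  obtain ⟨hα₁, hα₂⟩ := hα
  have hE := continuousOn_eulerIntegral (r := -α) (s := α) (q := -α)
    (by linarith) hα₁ (by linarith) (0, 1) (by simp)
  have hpath : Tendsto (fun x : ℝ => (x⁻¹, (1 : ℝ))) atTop
      (𝓝[{v | 0 ≤ v.1 ∧ 0 ≤ v.2 ∧ 0 < v.1 + v.2}] (0, 1)) := by
    refine tendsto_nhdsWithin_iff.2
      ⟨tendsto_inv_atTop_zero.prodMk_nhds tendsto_const_nhds, ?_⟩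
    filter_upwards [eventually_gt_atTop 0] with x hx
    exact ⟨by positivity, zero_le_one, by positivity⟩
  have hlim := (hE.tendsto.comp hpath).const_mul (1 / (Gamma (1 - α) * Gamma (1 + α)))
  have hconst : 1 / (Gamma (1 - α) * Gamma (1 + α)) * eulerIntegral (-α) α (-α) 0 1 =
      Gamma (1 - 2 * α) / (Gamma (1 - α) * Gamma (2 - α)) := by
    have hΓ : Gamma (1 + α) ≠ 0 := (Gamma_pos_of_pos (by linarith)).ne'
    rw [eulerIntegral_zero_one hα₁ (by linarith), ProbabilityTheory.beta,
      show -α + -α + 1 = 1 - 2 * α by ring, show 1 - 2 * α + (α + 1) = 2 - α by ring, add_comm α 1]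
    field_simp
  rw [hconst] at hlim
  refine hlim.congr' ?_
  filter_upwards [eventually_gt_atTop 0] with x hx
  have hscale := eulerIntegral_mul_mul (r := -α) (s := α) (q := -α) (inv_nonneg.2 hx.le)
    zero_le_one hx.le
  rw [mul_one, inv_mul_cancel₀ hx.ne', inv_rpow hx.le, rpow_neg hx.le, inv_inv] at hscale
  simp only [Function.comp_apply, hscale, Fhyp_eq_eulerIntegral]
  ring

lemma isTheta_Fhyp_atTop (hα : α ∈ Ioo (-1) (1 / 2)) :
    Fhyp α =Θ[atTop] fun x => x ^ (-α) := by
  have hΓ : Gamma (1 - 2 * α) / (Gamma (1 - α) * Gamma (2 - α)) ≠ 0 := by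
    have := Gamma_pos_of_pos (show 0 < 1 - 2 * α by linarith [hα.2])
    have := Gamma_pos_of_pos (show 0 < 1 - α by linarith [hα.2])
    have := Gamma_pos_of_pos (show 0 < 2 - α by linarith [hα.2])
    positivity
  refine (isTheta_of_div_tendsto_nhds_ne_zero
    ((tendsto_rpow_mul_Fhyp_atTop hα).congr' ?_) hΓ).symm
  filter_upwards [eventually_ge_atTop 0] with x hx
  rw [rpow_neg hx, div_inv_eq_mul, mul_comm]

end Hypergeometric

section PowerGrowth

variable {s : ℝ}

lemma integrableOn_Ioi_iff_of_isTheta_rpow {E : Type*} [NormedAddCommGroup E] {f : ℝ → E} {a : ℝ}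
    (hf : LocallyIntegrableOn f (Ici a)) (hfs : f =Θ[atTop] fun t => t ^ s) :
    IntegrableOn f (Ioi a) ↔ s < -1 := by
  rw [← integrableOn_Ici_iff_integrableOn_Ioi, integrableOn_Ici_iff_integrableAtFilter_atTop,
    and_iff_left hf, ← integrableAtFilter_rpow_atTop_iff]
  have hfm : StronglyMeasurableAtFilter f atTop :=
    ⟨Ici a, Ici_mem_atTop a, hf.aestronglyMeasurable⟩
  have hsm : StronglyMeasurableAtFilter (fun t : ℝ => t ^ s) atTop :=
    Measurable.stronglyMeasurable (by fun_prop) |>.stronglyMeasurableAtFilter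
  exact ⟨hfs.2.integrableAtFilter hsm, hfs.1.integrableAtFilter hfm⟩

lemma isTheta_one_add_rpow_atTop (q : ℝ) :
    (fun t : ℝ => (1 + t) ^ q) =Θ[atTop] fun t => t ^ q := by
  have hlin : (fun t : ℝ => 1 + t) =Θ[atTop] fun t => t :=
    (isLittleO_const_id_atTop (1 : ℝ)).add_isTheta (isTheta_refl id atTop)
  exact hlin.rpow ((eventually_ge_atTop 0).mono fun t ht => add_nonneg zero_le_one ht)
    (eventually_ge_atTop 0)

lemma integrableOn_Ioi_mul_one_add_rpow_iff {ρ : ℝ → ℝ} (hρ : LocallyIntegrableOn ρ (Ici 0))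
    (hρs : ρ =Θ[atTop] fun t => t ^ s) (q : ℝ) :
    IntegrableOn (fun t => ρ t * (1 + t) ^ q) (Ioi 0) ↔ s + q < -1 := by
  refine integrableOn_Ioi_iff_of_isTheta_rpow (hρ.mul_continuousOn ?_ isClosed_Ici.isLocallyClosed)
    ((hρs.mul (isTheta_one_add_rpow_atTop q)).trans_eventuallyEq ?_)
  · exact ContinuousOn.rpow_const (by fun_prop)
      fun t ht => .inl (add_pos_of_pos_of_nonneg one_pos ht).ne'
  · filter_upwards [eventually_gt_atTop 0] with t ht
    exact (rpow_add ht s q).symm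

end PowerGrowth

section SpectralMeasure

variable {α k : ℝ}

lemma continuousOn_mul_Fhyp_div (hα : α ∈ Ioo (-1) (1 / 2)) (hk : 0 < k) :
    ContinuousOn (fun t => t * Fhyp α (t / k)) (Ici 0) :=
  continuousOn_id.mul ((continuousOn_Fhyp hα).comp (by fun_prop)
    fun _ ht => div_nonneg ht hk.le)

lemma isTheta_mul_Fhyp_div_atTop (hα : α ∈ Ioo (-1) (1 / 2)) (hk : 0 < k) :
    (fun t => t * Fhyp α (t / k)) =Θ[atTop] fun t => t ^ (1 - α) := by
  have hdiv : (fun t : ℝ => (t / k) ^ (-α)) =Θ[atTop] fun t => t ^ (-α) := by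
    refine IsTheta.rpow ((eventually_ge_atTop 0).mono fun t ht => div_nonneg ht hk.le)
      (eventually_ge_atTop 0) ?_
    simp only [div_eq_inv_mul]
    exact (isTheta_refl id atTop).const_mul_left (inv_ne_zero hk.ne')
  have htop : Tendsto (fun t : ℝ => t / k) atTop atTop := tendsto_id.atTop_div_const hk
  have hF : (fun t => Fhyp α (t / k)) =Θ[atTop] fun t => (t / k) ^ (-α) :=
    ⟨(isTheta_Fhyp_atTop hα).1.comp_tendsto htop, (isTheta_Fhyp_atTop hα).2.comp_tendsto htop⟩
  refine ((isTheta_refl id atTop).mul (hF.trans hdiv)).trans_eventuallyEq ?_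
  filter_upwards [eventually_gt_atTop 0] with t ht
  rw [sub_eq_add_neg, rpow_add ht, rpow_one, id]

end SpectralMeasure

lemma arcsin_mul_pi_div_pi_mem_Ioo {lam : ℝ} (hlam : lam ∈ Ioo (-(1 / π)) (1 / π)) :
    arcsin (lam * π) / π ∈ Ioo (-(1 / 2)) (1 / 2) := by
  obtain ⟨hlower, hupper⟩ := hlam
  rw [← neg_div, div_lt_iff₀ pi_pos] at hlower
  rw [lt_div_iff₀ pi_pos] at hupper
  rw [mem_Ioo, lt_div_iff₀ pi_pos, div_lt_iff₀ pi_pos]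
  have := neg_pi_div_two_lt_arcsin.2 hlower
  have := arcsin_lt_pi_div_two.2 hupper
  constructor <;> linarith

theorem spectral_dimension_general {α k : ℝ} (hα : α ∈ Ioo (-1) (1 / 2)) (hk : 0 < k) :
    (∀ p : ℝ, IntegrableOn (fun t => t * Fhyp α (t / k) * (1 + t) ^ (-(p / 2))) (Ioi 0) ↔
      4 - 2 * α < p) ∧
    sInf {p : ℝ | IntegrableOn (fun t => t * Fhyp α (t / k) * (1 + t) ^ (-(p / 2))) (Ioi 0)} =
      4 - 2 * α := by
  have hiff (p : ℝ) : IntegrableOn (fun t => t * Fhyp α (t / k) * (1 + t) ^ (-(p / 2))) (Ioi 0) ↔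
      4 - 2 * α < p := by
    rw [integrableOn_Ioi_mul_one_add_rpow_iff
      ((continuousOn_mul_Fhyp_div hα hk).locallyIntegrableOn measurableSet_Ici)
      (isTheta_mul_Fhyp_div_atTop hα hk)]
    constructor <;> intro h <;> linarith
  refine ⟨hiff, ?_⟩
  simp only [hiff]
  exact csInf_Ioi

theorem spectral_dimension (lam : ℝ) (hlam : lam ∈ Set.Ioo (-(1/π)) (1/π))
    (α : ℝ) (hα : α = Real.arcsin (lam * π) / π)
    (μ : ℝ) (hμ : 0 < μ)
    (J : ℝ → ℝ) (hJ : ∀ x, J x = x * Fhyp α (x / μ^2)) :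
    (∀ p : ℝ, IntegrableOn (fun t => J t * (1 + t) ^ (-(p/2))) (Set.Ioi 0) ↔
      4 - 2*α < p) ∧
    sInf {p : ℝ | IntegrableOn (fun t => J t * (1 + t) ^ (-(p/2))) (Set.Ioi 0)} =
      4 - 2 * Real.arcsin (lam * π) / π := by
  have hα_mem : α ∈ Ioo (-(1 / 2)) (1 / 2) := hα ▸ arcsin_mul_pi_div_pi_mem_Ioo hlam
  simpa only [hJ, mul_div_assoc, ← hα] using
    spectral_dimension_general ⟨by linarith [hα_mem.1], hα_mem.2⟩ (pow_pos hμ 2)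
end

section
/- Let λ ∈ ℝ, c ∈ ℝ with c ≠ 0, and let φ : [0,∞) → ℝ be twice continuously differentiable with φ(0) = 1 and such that for some constants C, δ > 0 one has |φ(t)| ≤ C(1+t)^{−δ}, |φ'(t)| ≤ C(1+t)^{−1−δ}, and |φ''(t)| ≤ C(1+t)^{−2−δ} for all t ≥ 0. If φ satisfies φ(x) = c/(1+x) − λ ∫₀^∞ φ(t)/(1+t+x) dt for all x ≥ 0, then the function g(x) := x(1+x)φ''(x) + (2+4x)φ'(x) + ((2c+λ)/c)·φ(x) satisfies the homogeneous equation g(x) = −λ ∫₀^∞ g(t)/(1+t+x) dt for all x ≥ 0, all integrals converging absolutely. -/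
open MeasureTheory Real Set

/-!
Write `T` for the operator with kernel `1 / (1 + t + x)` and `L f = (x (1 + x) f)''`. The kernel
satisfies `∂ₓ² (x (1 + x) / (1 + t + x)) = 2 t (1 + t) / (1 + t + x) ^ 3`, which is symmetric to
`t (1 + t) ∂ₜ² (1 / (1 + t + x))`, so two integrations by parts give
`L (T φ) = T (L φ) + φ(0) / (1 + x)`. Since `L` annihilates `1 / (1 + x)`, applying it to
`φ = c / (1 + x) - lam T φ` shows that `L φ` solves the same equation with source
`-lam φ(0) / (1 + x)`, and `g = L φ + (lam φ(0) / c) φ` is the combination whose source cancels.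

The equation itself yields the decay needed for the integrations by parts: the `n`-th derivative of
`T φ` is a multiple of `∫ φ(t) / (1 + t + x) ^ (n + 1) dt`, which is controlled by the absolute
convergence of `∫ φ(t) / (1 + t) dt`.
-/

section StieltjesTransform

open Filter Topology

/-- The Stieltjes transform of order `n + 1` of the measure `f dμ`, evaluated at `1 + x`. The
exponent is shifted so that order `0` is the operator with kernel `1 / (1 + t + x)`. -/
noncomputable def stieltjesTransform (μ : Measure ℝ) (f : ℝ → ℝ) (n : ℕ) (x : ℝ) : ℝ :=
  ∫ t, f t / (1 + t + x) ^ (n + 1) ∂μ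

variable {μ : Measure ℝ} {f : ℝ → ℝ} {x : ℝ}

lemma integrable_div_pow_of_le (hμ : ∀ᵐ t ∂μ, 0 ≤ t) {m n : ℕ} (hmn : m ≤ n)
    (hf : Integrable (fun t => f t / (1 + t) ^ m) μ) (hx : -1 < x) :
    Integrable (fun t => f t / (1 + t + x) ^ n) μ := by
  obtain ⟨k, rfl⟩ := Nat.exists_eq_add_of_le hmn
  have hx' : 0 < 1 + x := by linarith
  have hbound : ∀ᵐ t ∂μ, ‖((1 + t) / (1 + t + x)) ^ m * (1 / (1 + t + x)) ^ k‖ ≤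
      (1 + 1 / (1 + x)) ^ m * (1 / (1 + x)) ^ k := by
    filter_upwards [hμ] with t ht
    have hs : 0 < 1 + t + x := by linarith
    have hinv : 1 / (1 + t + x) ≤ 1 / (1 + x) := by gcongr; linarith
    have hratio : (1 + t) / (1 + t + x) ≤ 1 + 1 / (1 + x) := by
      calc (1 + t) / (1 + t + x)
          ≤ (1 + t + x + 1) / (1 + t + x) := (div_le_div_iff_of_pos_right hs).2 (by linarith)
        _ = 1 + 1 / (1 + t + x) := by field_simp
        _ ≤ 1 + 1 / (1 + x) := by gcongr
    rw [Real.norm_of_nonneg (by positivity)]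
    gcongr
  refine (hf.mul_bdd (by measurability) hbound).congr ?_
  filter_upwards [hμ] with t ht
  have hs : 0 < 1 + t + x := by linarith
  simp only [div_pow, one_pow, pow_add]
  field_simp

lemma norm_pow_mul_div_pow_add_le {s : ℝ} (hx : 0 ≤ x) (hxs : x ≤ s) (hs : 0 < s) (a : ℝ)
    (n k : ℕ) : ‖x ^ n * (a / s ^ (n + k))‖ ≤ ‖a‖ / s ^ k := by
  calc ‖x ^ n * (a / s ^ (n + k))‖ = x ^ n * (‖a‖ / s ^ (n + k)) := by
        rw [norm_mul, norm_div, Real.norm_of_nonneg (pow_nonneg hx n),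
          Real.norm_of_nonneg (pow_nonneg hs.le _)]
    _ ≤ s ^ n * (‖a‖ / s ^ (n + k)) := by gcongr
    _ = ‖a‖ / s ^ k := by rw [pow_add]; field_simp

lemma hasDerivAt_div_pow_succ {f u : ℝ → ℝ} {f' y : ℝ} (hf : HasDerivAt f f' y)
    (hu : HasDerivAt u 1 y) (hy : u y ≠ 0) (n : ℕ) :
    HasDerivAt (fun z => f z / u z ^ (n + 1))
      (f' / u y ^ (n + 1) - (n + 1) * (f y / u y ^ (n + 2))) y := by
  refine (hf.div (hu.pow (n + 1)) (pow_ne_zero _ hy)).congr_deriv ?_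
  simp only [Nat.add_sub_cancel, Pi.pow_apply]
  push_cast
  field_simp
  ring

lemma hasDerivWithinAt_eq_of_eqOn {f g : ℝ → ℝ} {f' g' : ℝ} {s : Set ℝ}
    (hs : UniqueDiffWithinAt ℝ s x) (hx : x ∈ s) (hf : HasDerivWithinAt f f' s x)
    (hg : HasDerivWithinAt g g' s x) (hfg : EqOn f g s) : f' = g' :=
  hs.eq_deriv s hf (hg.congr hfg (hfg hx))

lemma hasDerivAt_stieltjesTransform (hμ : ∀ᵐ t ∂μ, 0 ≤ t)
    (hf : Integrable (fun t => f t / (1 + t)) μ) (hx : -1 < x) (n : ℕ) :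
    HasDerivAt (stieltjesTransform μ f n) (-(n + 1) * stieltjesTransform μ f (n + 1) x) x := by
  have hint {y : ℝ} (hy : -1 < y) (k : ℕ) :
      Integrable (fun t => f t / (1 + t + y) ^ (k + 1)) μ :=
    integrable_div_pow_of_le hμ (m := 1) (by omega) (by simpa using hf) hy
  obtain ⟨y₀, hy₀, hy₀x⟩ := exists_between hx
  have hnhds : Ioi y₀ ∈ 𝓝 x := Ioi_mem_nhds hy₀x
  rw [stieltjesTransform, ← integral_const_mul]
  refine (hasDerivAt_integral_of_dominated_loc_of_deriv_le
    (F' := fun y t => -((n : ℝ) + 1) * (f t / (1 + t + y) ^ (n + 2)))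
    (bound := fun t => ((n : ℝ) + 1) * ‖f t / (1 + t + y₀) ^ (n + 2)‖)
    hnhds ?_ (hint hx n) ((hint hx (n + 1)).const_mul _).aestronglyMeasurable ?_
    ((hint hy₀ (n + 1)).norm.const_mul _) ?_).2
  · filter_upwards [hnhds] with y hy
    exact (hint (hy₀.trans hy) n).aestronglyMeasurable
  · filter_upwards [hμ] with t ht y (hy : y₀ < y)
    have hs₀ : 0 < 1 + t + y₀ := by linarith
    rw [norm_mul, norm_neg, Real.norm_of_nonneg (by positivity : (0 : ℝ) ≤ n + 1), norm_div,
      norm_div, Real.norm_of_nonneg (by positivity : 0 ≤ (1 + t + y₀) ^ (n + 2)),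
      Real.norm_of_nonneg (pow_nonneg (by linarith) _ : 0 ≤ (1 + t + y) ^ (n + 2))]
    gcongr
  · filter_upwards [hμ] with t ht y (hy : y₀ < y)
    refine (hasDerivAt_div_pow_succ (hasDerivAt_const y (f t))
      ((hasDerivAt_id' y).const_add (1 + t)) (by linarith) n).congr_deriv ?_
    simp only [zero_div, zero_sub, neg_mul]

lemma tendsto_pow_mul_stieltjesTransform (hμ : ∀ᵐ t ∂μ, 0 ≤ t)
    (hf : Integrable (fun t => f t / (1 + t)) μ) (n : ℕ) :
    Tendsto (fun x => x ^ n * stieltjesTransform μ f n x) atTop (𝓝 0) := by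
  have hbound {x t : ℝ} (hx : 0 ≤ x) (ht : 0 ≤ t) :
      ‖x ^ n * (f t / (1 + t + x) ^ (n + 1))‖ ≤ ‖f t‖ / (1 + t + x) := by
    simpa using norm_pow_mul_div_pow_add_le hx (by linarith : x ≤ 1 + t + x) (by linarith) (f t) n 1
  have hlim : Tendsto (fun x => ∫ t, x ^ n * (f t / (1 + t + x) ^ (n + 1)) ∂μ) atTop
      (𝓝 (∫ _, (0 : ℝ) ∂μ)) := by
    refine tendsto_integral_filter_of_dominated_convergence (fun t => ‖f t / (1 + t)‖)
      ?_ ?_ hf.norm ?_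
    · filter_upwards [eventually_ge_atTop 0] with x hx
      exact ((integrable_div_pow_of_le hμ (m := 1) (by omega) (by simpa using hf)
        (by linarith)).const_mul _).aestronglyMeasurable
    · filter_upwards [eventually_ge_atTop 0] with x hx
      filter_upwards [hμ] with t ht
      refine (hbound hx ht).trans ?_
      rw [norm_div, Real.norm_of_nonneg (by positivity : 0 ≤ 1 + t)]
      exact div_le_div_of_nonneg_left (norm_nonneg _) (by positivity) (by linarith)
    · filter_upwards [hμ] with t ht
      refine squeeze_zero_norm' ?_ (tendsto_const_nhds.div_atTop
        (tendsto_atTop_add_const_left atTop (1 + t) tendsto_id) (a := ‖f t‖))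
      filter_upwards [eventually_ge_atTop 0] with x hx using hbound hx ht
  simpa only [stieltjesTransform, integral_const_mul, integral_zero] using hlim

-- The transform of `‖f‖` of order `1` is minus the derivative of its transform of order `0`, which
-- decreases to `0`: this gives integrability without Tonelli's theorem.
lemma integrableOn_pow_mul_stieltjesTransform (hμ : ∀ᵐ t ∂μ, 0 ≤ t)
    (hf : Integrable (fun t => f t / (1 + t)) μ) (n : ℕ) :
    IntegrableOn (fun x => x ^ n * stieltjesTransform μ f (n + 1) x) (Ioi 0) := by
  have hf_abs : Integrable (fun t => ‖f t‖ / (1 + t)) μ := by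
    refine hf.norm.congr ?_
    filter_upwards [hμ] with t ht
    rw [norm_div, Real.norm_of_nonneg (by positivity : 0 ≤ 1 + t)]
  have hderiv (x : ℝ) (hx : x ∈ Ici 0) : HasDerivAt (stieltjesTransform μ (fun t => ‖f t‖) 0)
      (-stieltjesTransform μ (fun t => ‖f t‖) 1 x) x := by
    simpa using hasDerivAt_stieltjesTransform hμ hf_abs (by linarith [mem_Ici.1 hx]) 0
  have hnonneg {x : ℝ} (hx : 0 ≤ x) : 0 ≤ stieltjesTransform μ (fun t => ‖f t‖) 1 x :=
    integral_nonneg_of_ae <| by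
      filter_upwards [hμ] with t ht
      exact div_nonneg (norm_nonneg _) (by positivity)
  have hmajorant : IntegrableOn (stieltjesTransform μ (fun t => ‖f t‖) 1) (Ioi 0) := by
    have hlim := tendsto_pow_mul_stieltjesTransform hμ hf_abs 0
    simp only [pow_zero, one_mul] at hlim
    simpa using (integrableOn_Ioi_deriv_of_nonpos' hderiv
      (fun x hx => neg_nonpos.2 (hnonneg (mem_Ioi.1 hx).le)) hlim).neg
  have hcont : ContinuousOn (fun x => x ^ n * stieltjesTransform μ f (n + 1) x) (Ioi 0) :=
    (continuousOn_pow n).mul fun x hx => (hasDerivAt_stieltjesTransform hμ hf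
      (by linarith [mem_Ioi.1 hx]) (n + 1)).continuousAt.continuousWithinAt
  refine hmajorant.mono' (hcont.aestronglyMeasurable measurableSet_Ioi) ?_
  filter_upwards [ae_restrict_mem measurableSet_Ioi] with x (hx : 0 < x)
  rw [stieltjesTransform, ← integral_const_mul]
  refine norm_integral_le_of_norm_le
    (integrable_div_pow_of_le hμ (m := 1) (by omega) (by simpa using hf_abs) (by linarith)) ?_
  filter_upwards [hμ] with t ht
  exact norm_pow_mul_div_pow_add_le hx.le (by linarith) (by linarith) (f t) n 2

lemma stieltjesTransform_mul_quadratic (hμ : ∀ᵐ t ∂μ, 0 ≤ t)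
    (hf : Integrable (fun t => f t / (1 + t)) μ) (hx : -1 < x) :
    stieltjesTransform μ (fun t => t * (1 + t) * f t) 2 x =
      x * (1 + x) * stieltjesTransform μ f 2 x - (1 + 2 * x) * stieltjesTransform μ f 1 x
        + stieltjesTransform μ f 0 x := by
  have hint (k : ℕ) : Integrable (fun t => f t / (1 + t + x) ^ (k + 1)) μ :=
    integrable_div_pow_of_le hμ (m := 1) (by omega) (by simpa using hf) hx
  simp only [stieltjesTransform]
  rw [← integral_const_mul, ← integral_const_mul,
    ← integral_sub ((hint 2).const_mul _) ((hint 1).const_mul _),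
    ← integral_add (by exact ((hint 2).const_mul _).sub ((hint 1).const_mul _)) (hint 0)]
  refine integral_congr_ae ?_
  filter_upwards [hμ] with t ht
  have hs : 1 + t + x ≠ 0 := by linarith
  field_simp
  ring

lemma ae_nonneg_restrict_Ioi : ∀ᵐ t ∂volume.restrict (Ioi (0 : ℝ)), 0 ≤ t := by
  filter_upwards [ae_restrict_mem measurableSet_Ioi] with t ht using (mem_Ioi.1 ht).le

lemma stieltjesTransform_of_hasDerivAt {f' : ℝ → ℝ} {n : ℕ} (hx : -1 < x)
    (hcont : ContinuousWithinAt f (Ici 0) 0) (hderiv : ∀ t ∈ Ioi 0, HasDerivAt f (f' t) t)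
    (hint : IntegrableOn (fun t => f t / (1 + t + x) ^ (n + 2)) (Ioi 0))
    (hint' : IntegrableOn (fun t => f' t / (1 + t + x) ^ (n + 1)) (Ioi 0))
    (hlim : Tendsto (fun t => f t / (1 + t + x) ^ (n + 1)) atTop (𝓝 0)) :
    stieltjesTransform (volume.restrict (Ioi 0)) f' n x =
      (n + 1) * stieltjesTransform (volume.restrict (Ioi 0)) f (n + 1) x
        - f 0 / (1 + x) ^ (n + 1) := by
  have hcont_div : ContinuousWithinAt (fun t => f t / (1 + t + x) ^ (n + 1)) (Ici 0) 0 :=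
    hcont.div (by fun_prop) (pow_ne_zero _ (by linarith))
  have hderiv_div (t : ℝ) (ht : t ∈ Ioi 0) :=
    hasDerivAt_div_pow_succ (hderiv t ht) (((hasDerivAt_id' t).const_add 1).add_const x)
      (by linarith [mem_Ioi.1 ht]) n
  have hftc := integral_Ioi_of_hasDerivAt_of_tendsto hcont_div hderiv_div
    (hint'.sub (hint.const_mul _)) hlim
  rw [integral_sub hint' (hint.const_mul _), integral_const_mul] at hftc
  simp only [add_zero] at hftc
  simp only [stieltjesTransform]
  linarith

lemma tendsto_inv_one_add_add (x : ℝ) :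
    Tendsto (fun t : ℝ => (1 + t + x)⁻¹) atTop (𝓝 0) :=
  (tendsto_atTop_add_const_right _ x
    (tendsto_atTop_add_const_left _ 1 tendsto_id)).inv_tendsto_atTop

/-- The value `x (1 + x) f'' + (2 + 4 x) f' + 2 f` of `(x (1 + x) f)''`, in terms of given first and
second derivatives `f'` and `f''` of `f`. This differential operator commutes with the kernel
`1 / (1 + t + x)` up to a boundary term at `0`. -/
def quadraticMulDeriv2 (f f' f'' : ℝ → ℝ) (x : ℝ) : ℝ :=
  x * (1 + x) * f'' x + (2 + 4 * x) * f' x + 2 * f x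

/-- `f'` and `f''` are the first two derivatives of `f` on `[0, ∞)`, and `f` decays, to second
order, just enough for the Stieltjes transform of `(t (1 + t) f)''` to exist and to be integrable by
parts twice without boundary terms at infinity. -/
structure HasDerivDecay (f f' f'' : ℝ → ℝ) : Prop where
  hasDerivWithinAt : ∀ x ∈ Ici 0, HasDerivWithinAt f (f' x) (Ici 0) x
  hasDerivWithinAt' : ∀ x ∈ Ici 0, HasDerivWithinAt f' (f'' x) (Ici 0) x
  integrableOn : IntegrableOn (fun t => f t / (1 + t)) (Ioi 0)
  integrableOn_deriv : IntegrableOn f' (Ioi 0)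
  integrableOn_mul_deriv2 : IntegrableOn (fun t => t * f'' t) (Ioi 0)
  tendsto : Tendsto f atTop (𝓝 0)
  tendsto_mul_deriv : Tendsto (fun t => t * f' t) atTop (𝓝 0)

namespace HasDerivDecay

variable {f' f'' : ℝ → ℝ}

lemma integrableOn_div_pow (h : HasDerivDecay f f' f'') (hx : -1 < x) (n : ℕ) :
    IntegrableOn (fun t => f t / (1 + t + x) ^ (n + 1)) (Ioi 0) :=
  integrable_div_pow_of_le ae_nonneg_restrict_Ioi (m := 1) (by omega)
    (by simpa [IntegrableOn] using h.integrableOn) hx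

lemma integrableOn_deriv_div_pow (h : HasDerivDecay f f' f'') (hx : -1 < x) (n : ℕ) :
    IntegrableOn (fun t => f' t / (1 + t + x) ^ n) (Ioi 0) :=
  integrable_div_pow_of_le ae_nonneg_restrict_Ioi n.zero_le
    (by simpa [IntegrableOn] using h.integrableOn_deriv) hx

lemma integrableOn_quadratic_mul_div (h : HasDerivDecay f f' f'') (hx : -1 < x) :
    IntegrableOn (fun t => t * (1 + t) * f t / (1 + t + x) ^ 3) (Ioi 0) := by
  have hint := ((h.integrableOn_div_pow hx 0).sub
    ((h.integrableOn_div_pow hx 1).const_mul (1 + 2 * x))).add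
    ((h.integrableOn_div_pow hx 2).const_mul (x * (1 + x)))
  refine IntegrableOn.congr_fun hint (fun t (ht : 0 < t) => ?_) measurableSet_Ioi
  have hs : 1 + t + x ≠ 0 := by linarith
  simp only [Pi.add_apply, Pi.sub_apply]
  field_simp
  ring

lemma integrableOn_quadratic_mul_deriv_div (h : HasDerivDecay f f' f'') (hx : -1 < x) :
    IntegrableOn (fun t => ((1 + 2 * t) * f t + t * (1 + t) * f' t) / (1 + t + x) ^ 2)
      (Ioi 0) := by
  have hint := (((h.integrableOn_div_pow hx 0).const_mul 2).sub
    ((h.integrableOn_div_pow hx 1).const_mul (1 + 2 * x))).add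
    ((h.integrableOn_deriv.sub ((h.integrableOn_deriv_div_pow hx 1).const_mul (1 + 2 * x))).add
      ((h.integrableOn_deriv_div_pow hx 2).const_mul (x * (1 + x))))
  refine IntegrableOn.congr_fun hint (fun t (ht : 0 < t) => ?_) measurableSet_Ioi
  have hs : 1 + t + x ≠ 0 := by linarith
  simp only [Pi.add_apply, Pi.sub_apply]
  field_simp
  ring

lemma integrableOn_quadraticMulDeriv2_div (h : HasDerivDecay f f' f'') (hx : -1 < x) :
    IntegrableOn (fun t => quadraticMulDeriv2 f f' f'' t / (1 + t + x)) (Ioi 0) := by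
  have hint2 : IntegrableOn (fun t => t * f'' t / (1 + t + x) ^ 1) (Ioi 0) :=
    integrable_div_pow_of_le ae_nonneg_restrict_Ioi zero_le_one
      (by simpa [IntegrableOn] using h.integrableOn_mul_deriv2) hx
  have hint := ((h.integrableOn_mul_deriv2.sub (hint2.const_mul x)).add
    ((h.integrableOn_deriv.const_mul 4).sub
      ((h.integrableOn_deriv_div_pow hx 1).const_mul (2 + 4 * x)))).add
    ((h.integrableOn_div_pow hx 0).const_mul 2)
  refine IntegrableOn.congr_fun hint (fun t (ht : 0 < t) => ?_) measurableSet_Ioi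
  have hs : 1 + t + x ≠ 0 := by linarith
  simp only [Pi.add_apply, Pi.sub_apply, quadraticMulDeriv2]
  field_simp
  ring

lemma hasDerivAt_quadratic_mul (h : HasDerivDecay f f' f'') (hx : 0 < x) :
    HasDerivAt (fun t => t * (1 + t) * f t) ((1 + 2 * x) * f x + x * (1 + x) * f' x) x := by
  refine (((hasDerivAt_id x).mul ((hasDerivAt_id x).const_add 1)).mul
    ((h.hasDerivWithinAt x hx.le).hasDerivAt (Ici_mem_nhds hx))).congr_deriv ?_
  simp only [Pi.mul_apply, id]
  ring

lemma hasDerivAt_quadratic_mul_deriv (h : HasDerivDecay f f' f'') (hx : 0 < x) :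
    HasDerivAt (fun t => (1 + 2 * t) * f t + t * (1 + t) * f' t)
      (quadraticMulDeriv2 f f' f'' x) x := by
  have hf := (h.hasDerivWithinAt x hx.le).hasDerivAt (Ici_mem_nhds hx)
  have hf' := (h.hasDerivWithinAt' x hx.le).hasDerivAt (Ici_mem_nhds hx)
  refine (((((hasDerivAt_id x).const_mul 2).const_add 1).mul hf).add
    (((hasDerivAt_id x).mul ((hasDerivAt_id x).const_add 1)).mul hf')).congr_deriv ?_
  simp only [Pi.mul_apply, id, quadraticMulDeriv2]
  ring

lemma tendsto_quadratic_mul_div (h : HasDerivDecay f f' f'') (x : ℝ) :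
    Tendsto (fun t => t * (1 + t) * f t / (1 + t + x) ^ 2) atTop (𝓝 0) := by
  have hinv := tendsto_inv_one_add_add x
  have hlim := h.tendsto.mul (((hinv.const_mul (1 + 2 * x)).const_sub 1).add
    ((hinv.pow 2).const_mul (x * (1 + x))))
  rw [zero_mul] at hlim
  refine hlim.congr' ?_
  filter_upwards [eventually_gt_atTop (-1 - x)] with t ht
  have hs : 1 + t + x ≠ 0 := by linarith
  field_simp
  ring

lemma tendsto_quadratic_mul_deriv_div (h : HasDerivDecay f f' f'') (x : ℝ) :
    Tendsto (fun t => ((1 + 2 * t) * f t + t * (1 + t) * f' t) / (1 + t + x)) atTop (𝓝 0) := by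
  have hinv := tendsto_inv_one_add_add x
  have hlim := (h.tendsto.mul ((hinv.const_mul (1 + 2 * x)).const_sub 2)).add
    (h.tendsto_mul_deriv.mul ((hinv.const_mul x).const_sub 1))
  rw [zero_mul, zero_mul, add_zero] at hlim
  refine hlim.congr' ?_
  filter_upwards [eventually_gt_atTop (-1 - x)] with t ht
  have hs : 1 + t + x ≠ 0 := by linarith
  field_simp
  ring

lemma stieltjesTransform_quadraticMulDeriv2 (h : HasDerivDecay f f' f'') (hx : -1 < x) :
    stieltjesTransform (volume.restrict (Ioi 0)) (quadraticMulDeriv2 f f' f'') 0 x =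
      quadraticMulDeriv2 (stieltjesTransform (volume.restrict (Ioi 0)) f 0)
        (fun y => -stieltjesTransform (volume.restrict (Ioi 0)) f 1 y)
        (fun y => 2 * stieltjesTransform (volume.restrict (Ioi 0)) f 2 y) x - f 0 / (1 + x) := by
  have hcont : ContinuousWithinAt f (Ici 0) 0 :=
    (h.hasDerivWithinAt 0 self_mem_Ici).continuousWithinAt
  have hcont' : ContinuousWithinAt f' (Ici 0) 0 :=
    (h.hasDerivWithinAt' 0 self_mem_Ici).continuousWithinAt
  have hparts := stieltjesTransform_of_hasDerivAt (n := 1) hx (by fun_prop)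
    (fun t ht => h.hasDerivAt_quadratic_mul ht) (h.integrableOn_quadratic_mul_div hx)
    (h.integrableOn_quadratic_mul_deriv_div hx) (h.tendsto_quadratic_mul_div x)
  have hparts' := stieltjesTransform_of_hasDerivAt (n := 0) hx (by fun_prop)
    (fun t ht => h.hasDerivAt_quadratic_mul_deriv ht) (h.integrableOn_quadratic_mul_deriv_div hx)
    (by simpa using h.integrableOn_quadraticMulDeriv2_div hx)
    (by simpa using h.tendsto_quadratic_mul_deriv_div x)
  have hkernel := stieltjesTransform_mul_quadratic ae_nonneg_restrict_Ioi h.integrableOn hx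
  rw [hparts', zero_add, hparts, hkernel, quadraticMulDeriv2]
  norm_num
  ring

end HasDerivDecay

end StieltjesTransform

section Fredholm

open Filter Topology

/-- `φ` solves the Fredholm equation `φ(x) = c / (1 + x) - lam ∫₀^∞ φ(t) / (1 + t + x) dt` for
`x ≥ 0`, with absolutely convergent integrals; `c = 0` is the homogeneous equation. -/
def IsFredholmSolution (lam c : ℝ) (φ : ℝ → ℝ) : Prop :=
  ∀ x : ℝ, 0 ≤ x → IntegrableOn (fun t => φ t / (1 + t + x)) (Ioi 0) ∧
    φ x = c / (1 + x) - lam * ∫ t in Ioi (0 : ℝ), φ t / (1 + t + x)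

/-- The function `c / (1 + x) ^ (n + 1) - lam ∫₀^∞ φ(t) / (1 + t + x) ^ (n + 1) dt`, which is
`(-1) ^ n / n !` times the `n`-th derivative of the right-hand side of the Fredholm equation. The
source term is encoded as the Stieltjes transform of the point mass at `0`. -/
noncomputable def fredholmRHS (lam c : ℝ) (φ : ℝ → ℝ) (n : ℕ) (x : ℝ) : ℝ :=
  c * stieltjesTransform (Measure.dirac 0) 1 n x
    - lam * stieltjesTransform (volume.restrict (Ioi 0)) φ n x

variable {lam c d x : ℝ} {φ φ' φ'' ψ : ℝ → ℝ}

lemma fredholmRHS_eq (lam c : ℝ) (φ : ℝ → ℝ) (n : ℕ) (x : ℝ) :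
    fredholmRHS lam c φ n x =
      c / (1 + x) ^ (n + 1) - lam * stieltjesTransform (volume.restrict (Ioi 0)) φ n x := by
  simp [fredholmRHS, stieltjesTransform, div_eq_mul_inv]

lemma ae_nonneg_dirac_zero : ∀ᵐ t ∂Measure.dirac (0 : ℝ), 0 ≤ t := by simp

lemma integrable_dirac_zero :
    Integrable (fun t : ℝ => (1 : ℝ → ℝ) t / (1 + t)) (Measure.dirac 0) :=
  integrable_dirac (by simp)

lemma hasDerivAt_fredholmRHS (hφ : IntegrableOn (fun t => φ t / (1 + t)) (Ioi 0)) (hx : -1 < x)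
    (n : ℕ) :
    HasDerivAt (fredholmRHS lam c φ n) (-(n + 1) * fredholmRHS lam c φ (n + 1) x) x := by
  refine (((hasDerivAt_stieltjesTransform ae_nonneg_dirac_zero integrable_dirac_zero hx
    n).const_mul c).sub ((hasDerivAt_stieltjesTransform ae_nonneg_restrict_Ioi hφ hx
    n).const_mul lam)).congr_deriv ?_
  rw [fredholmRHS]
  ring

lemma tendsto_pow_mul_fredholmRHS (lam c : ℝ)
    (hφ : IntegrableOn (fun t => φ t / (1 + t)) (Ioi 0)) (n : ℕ) :
    Tendsto (fun x => x ^ n * fredholmRHS lam c φ n x) atTop (𝓝 0) := by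
  have hlim := ((tendsto_pow_mul_stieltjesTransform ae_nonneg_dirac_zero integrable_dirac_zero
    n).const_mul c).sub ((tendsto_pow_mul_stieltjesTransform ae_nonneg_restrict_Ioi hφ
    n).const_mul lam)
  simpa only [fredholmRHS, mul_sub, mul_left_comm, mul_zero, sub_zero] using hlim

lemma integrableOn_pow_mul_fredholmRHS (lam c : ℝ)
    (hφ : IntegrableOn (fun t => φ t / (1 + t)) (Ioi 0)) (n : ℕ) :
    IntegrableOn (fun x => x ^ n * fredholmRHS lam c φ (n + 1) x) (Ioi 0) := by
  have hint := ((integrableOn_pow_mul_stieltjesTransform ae_nonneg_dirac_zero integrable_dirac_zero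
    n).const_mul c).sub ((integrableOn_pow_mul_stieltjesTransform ae_nonneg_restrict_Ioi hφ
    n).const_mul lam)
  refine IntegrableOn.congr_fun hint (fun x _ => ?_) measurableSet_Ioi
  simp only [fredholmRHS, Pi.sub_apply]
  ring

namespace IsFredholmSolution

lemma integrableOn_div_one_add (h : IsFredholmSolution lam c φ) :
    IntegrableOn (fun t => φ t / (1 + t)) (Ioi 0) := by
  simpa using (h 0 le_rfl).1

lemma eqOn_fredholmRHS (h : IsFredholmSolution lam c φ) :
    EqOn φ (fredholmRHS lam c φ 0) (Ici 0) := by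
  intro x hx
  simpa [fredholmRHS_eq, stieltjesTransform] using (h x hx).2

lemma deriv_eqOn (h : IsFredholmSolution lam c φ)
    (hφ' : ∀ x ∈ Ici (0 : ℝ), HasDerivWithinAt φ (φ' x) (Ici 0) x) :
    EqOn φ' (fun x => -fredholmRHS lam c φ 1 x) (Ici 0) := by
  intro x hx
  refine hasDerivWithinAt_eq_of_eqOn (uniqueDiffOn_Ici 0 x hx) hx (hφ' x hx)
    (HasDerivAt.hasDerivWithinAt ?_) h.eqOn_fredholmRHS
  simpa using hasDerivAt_fredholmRHS h.integrableOn_div_one_add (by linarith [mem_Ici.1 hx]) 0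

lemma deriv2_eqOn (h : IsFredholmSolution lam c φ)
    (hφ' : ∀ x ∈ Ici (0 : ℝ), HasDerivWithinAt φ (φ' x) (Ici 0) x)
    (hφ'' : ∀ x ∈ Ici (0 : ℝ), HasDerivWithinAt φ' (φ'' x) (Ici 0) x) :
    EqOn φ'' (fun x => 2 * fredholmRHS lam c φ 2 x) (Ici 0) := by
  intro x hx
  refine hasDerivWithinAt_eq_of_eqOn (uniqueDiffOn_Ici 0 x hx) hx (hφ'' x hx)
    (HasDerivAt.hasDerivWithinAt ?_) (h.deriv_eqOn hφ')
  refine (hasDerivAt_fredholmRHS h.integrableOn_div_one_add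
    (by linarith [mem_Ici.1 hx]) 1).neg.congr_deriv ?_
  norm_num

lemma hasDerivDecay (h : IsFredholmSolution lam c φ)
    (hφ' : ∀ x ∈ Ici (0 : ℝ), HasDerivWithinAt φ (φ' x) (Ici 0) x)
    (hφ'' : ∀ x ∈ Ici (0 : ℝ), HasDerivWithinAt φ' (φ'' x) (Ici 0) x) :
    HasDerivDecay φ φ' φ'' where
  hasDerivWithinAt := hφ'
  hasDerivWithinAt' := hφ''
  integrableOn := h.integrableOn_div_one_add
  integrableOn_deriv := by
    refine IntegrableOn.congr_fun (integrableOn_pow_mul_fredholmRHS lam c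
      h.integrableOn_div_one_add 0).neg (fun x hx => ?_) measurableSet_Ioi
    simp [h.deriv_eqOn hφ' (Ioi_subset_Ici_self hx)]
  integrableOn_mul_deriv2 := by
    refine IntegrableOn.congr_fun ((integrableOn_pow_mul_fredholmRHS lam c
      h.integrableOn_div_one_add 1).const_mul 2) (fun x hx => ?_) measurableSet_Ioi
    simp only [h.deriv2_eqOn hφ' hφ'' (Ioi_subset_Ici_self hx)]
    ring
  tendsto := by
    refine (tendsto_pow_mul_fredholmRHS lam c h.integrableOn_div_one_add 0).congr' ?_
    filter_upwards [eventually_ge_atTop 0] with x hx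
    simp [h.eqOn_fredholmRHS (mem_Ici.2 hx)]
  tendsto_mul_deriv := by
    have hlim := (tendsto_pow_mul_fredholmRHS lam c h.integrableOn_div_one_add 1).neg
    rw [neg_zero] at hlim
    refine hlim.congr' ?_
    filter_upwards [eventually_ge_atTop 0] with x hx
    simp [h.deriv_eqOn hφ' (mem_Ici.2 hx)]

-- The boundary term at `0` becomes the new source, while the old one disappears because
-- `x * (1 + x) * (c / (1 + x))` is linear in `x`.
lemma quadratic_mul_deriv2 (h : IsFredholmSolution lam c φ)
    (hφ' : ∀ x ∈ Ici (0 : ℝ), HasDerivWithinAt φ (φ' x) (Ici 0) x)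
    (hφ'' : ∀ x ∈ Ici (0 : ℝ), HasDerivWithinAt φ' (φ'' x) (Ici 0) x) :
    IsFredholmSolution lam (-(lam * φ 0)) (quadraticMulDeriv2 φ φ' φ'') := by
  intro x hx
  have hdecay := h.hasDerivDecay hφ' hφ''
  have hcomm := hdecay.stieltjesTransform_quadraticMulDeriv2 (by linarith : -1 < x)
  have hx' : 1 + x ≠ 0 := by linarith
  refine ⟨hdecay.integrableOn_quadraticMulDeriv2_div (by linarith), ?_⟩
  calc quadraticMulDeriv2 φ φ' φ'' x
      = -(lam * φ 0) / (1 + x) - lam * stieltjesTransform (volume.restrict (Ioi 0))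
          (quadraticMulDeriv2 φ φ' φ'') 0 x := by
        rw [hcomm]
        simp only [quadraticMulDeriv2, h.eqOn_fredholmRHS hx, h.deriv_eqOn hφ' hx,
          h.deriv2_eqOn hφ' hφ'' hx, fredholmRHS_eq]
        field_simp
        ring
    _ = _ := by simp only [stieltjesTransform, zero_add, pow_one]

lemma const_mul (h : IsFredholmSolution lam c φ) (a : ℝ) :
    IsFredholmSolution lam (a * c) (fun x => a * φ x) := by
  intro x hx
  obtain ⟨hint, heq⟩ := h x hx
  simp only [mul_div_assoc, integral_const_mul]
  exact ⟨hint.const_mul a, by rw [heq]; ring⟩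

lemma add (hφ : IsFredholmSolution lam c φ) (hψ : IsFredholmSolution lam d ψ) :
    IsFredholmSolution lam (c + d) (fun x => φ x + ψ x) := by
  intro x hx
  obtain ⟨hint, heq⟩ := hφ x hx
  obtain ⟨hint', heq'⟩ := hψ x hx
  simp only [add_div, integral_add hint hint']
  exact ⟨hint.add hint', by rw [heq, heq']; ring⟩

end IsFredholmSolution

end Fredholm

theorem homogeneous_equation_for_g_general {lam c : ℝ} (hc : c ≠ 0) {φ φ' φ'' : ℝ → ℝ}
    (hφ' : ∀ x ∈ Ici (0 : ℝ), HasDerivWithinAt φ (φ' x) (Ici 0) x)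
    (hφ'' : ∀ x ∈ Ici (0 : ℝ), HasDerivWithinAt φ' (φ'' x) (Ici 0) x)
    (hφ : IsFredholmSolution lam c φ) :
    IsFredholmSolution lam 0 (fun x =>
      x * (1 + x) * φ'' x + (2 + 4 * x) * φ' x + ((2 * c + lam * φ 0) / c) * φ x) := by
  convert (hφ.quadratic_mul_deriv2 hφ' hφ'').add (hφ.const_mul (lam * φ 0 / c)) using 1
  · rw [div_mul_cancel₀ _ hc, neg_add_cancel]
  · funext x
    rw [quadraticMulDeriv2, add_div, mul_div_cancel_right₀ _ hc]
    ring

theorem homogeneous_equation_for_g (lam c : ℝ) (hc : c ≠ 0)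
    (φ φ' φ'' : ℝ → ℝ)
    (hd1 : ∀ x ∈ Set.Ici (0:ℝ), HasDerivWithinAt φ (φ' x) (Set.Ici 0) x)
    (hd2 : ∀ x ∈ Set.Ici (0:ℝ), HasDerivWithinAt φ' (φ'' x) (Set.Ici 0) x)
    (hcont : ContinuousOn φ'' (Set.Ici 0))
    (hφ0 : φ 0 = 1)
    (C δ : ℝ) (hC : 0 < C) (hδ : 0 < δ)
    (hb0 : ∀ t : ℝ, 0 ≤ t → |φ t| ≤ C * (1 + t) ^ (-δ))
    (hb1 : ∀ t : ℝ, 0 ≤ t → |φ' t| ≤ C * (1 + t) ^ (-1 - δ))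
    (hb2 : ∀ t : ℝ, 0 ≤ t → |φ'' t| ≤ C * (1 + t) ^ (-2 - δ))
    (heq : ∀ x : ℝ, 0 ≤ x →
      IntegrableOn (fun t => φ t / (1 + t + x)) (Set.Ioi 0) ∧
      φ x = c / (1 + x) - lam * ∫ t in Set.Ioi (0:ℝ), φ t / (1 + t + x))
    (g : ℝ → ℝ)
    (hg : ∀ x, g x = x * (1 + x) * φ'' x + (2 + 4*x) * φ' x + ((2*c + lam)/c) * φ x) :
    ∀ x : ℝ, 0 ≤ x →
      IntegrableOn (fun t => g t / (1 + t + x)) (Set.Ioi 0) ∧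
      g x = -lam * ∫ t in Set.Ioi (0:ℝ), g t / (1 + t + x) := by
  obtain rfl : g = _ := funext hg
  simpa only [IsFredholmSolution, hφ0, mul_one, zero_div, zero_sub, neg_mul] using
    homogeneous_equation_for_g_general hc hd1 hd2 heq
end
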